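/- arXiv:0909.3052 — 2 statements merged into one kernel-verified Lean document; each statement's English description precedes it below -/
import Mathlib

section
/- For every real z > b_γ, the following almost-sure limits hold as n → ∞: (1/n)·E_{n,12}·(Λ_n − z·I_{p−k})^{-1}·E_{n,12}ᵀ → γ^{-1}·m(z)·I_k; (1/n)·E_{n,21}ᵀ·(Λ_n − z·I_{p−k})^{-1}·E_{n,21} → γ^{-1}·m(z)·I_k; and (1/n)·E_{n,12}·(Λ_n − z·I_{p−k})^{-1}·Λ_n^{1/2}·E_{n,21} → 0. -/
/-!
Write the eigenvalues `λ_{n,α}` as functions of `W`. Conditionally on `W`, each entry of the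
three products is a weighted sum `(1/n) ∑ d_α g(u_α) g(v_α)` of products of independent standard
Gaussians. The weights `(λ_α - z)⁻¹` or `(λ_α - z)⁻¹ √λ_α` are bounded as soon as `‖W‖² ≤ n b`
for some `b ∈ (b_γ, z)`. A Hanson–Wright inequality and Borel–Cantelli then show that each entry
differs from its conditional mean by an almost surely vanishing amount. The conditional mean is
`0` off the diagonal and for the cross product, and `(1/n) ∑ (λ_α - z)⁻¹` on the diagonal. Two
facts about `W` remain.

The upper edge. The probability that `‖W‖² > n b` is exponentially small. The proof is an
induction on the number of rows: after rotations, `W` is bordered by a row and a column whose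
lengths are at most about `√p` and `√n`. The inequality carried along is slightly stronger than a
norm bound, so that it is stable under bordering.

The Stieltjes transform. Let `T = tr (n z - WᵀW)⁻¹ = -(1/n) ∑ (λ_α - z)⁻¹`. Removing one row of
`W` at a time, Sherman–Morrison and Hanson–Wright give `(1 - T)(z T - γ⁻¹) - T → 0` almost
surely. The quadratic has two roots. Since `T` decreases in `z` while the larger root increases,
comparison with the same equation at a second point `z' ∈ (b_γ, z)` forces convergence to the
smaller root. In the parametrization `z = (κ + 1)(κ + γ⁻¹)/κ` this root is `γ⁻¹/(γ⁻¹ + κ)`, which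
equals `-γ⁻¹ m(z)` by an explicit evaluation of the Marchenko–Pastur integral.
-/

open MeasureTheory ProbabilityTheory Filter Matrix Topology

noncomputable section

instance matrixMeasurableSpace {m n : Type*} : MeasurableSpace (Matrix m n ℝ) :=
  MeasurableSpace.pi

/-- Convergence in distribution (weak convergence of laws) of a sequence of random elements. -/
def TendstoInDist {Ω E : Type*} [MeasurableSpace Ω] [MeasurableSpace E] [TopologicalSpace E]
    (P : Measure Ω) (X : ℕ → Ω → E) (ν : Measure E) : Prop :=
  ∀ f : BoundedContinuousFunction E ℝ,
    Tendsto (fun n => ∫ ω, f (X n ω) ∂P) atTop (𝓝 (∫ x, f x ∂ν))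

/-- Convergence to zero in probability. -/
def TendstoInProbZero {Ω : Type*} [MeasurableSpace Ω] (P : Measure Ω) (X : ℕ → Ω → ℝ) : Prop :=
  ∀ ε : ℝ, 0 < ε → Tendsto (fun n => P {ω | ε ≤ |X n ω|}) atTop (𝓝 0)

/-- `ν` is a centered multivariate Gaussian measure with covariance function `C`
(characterized through one-dimensional projections). -/
def IsCenteredGaussianCov {ι : Type*} [Fintype ι] (ν : Measure (ι → ℝ)) (C : ι → ι → ℝ) : Prop :=
  ∀ a : ι → ℝ,
    Measure.map (fun x => ∑ i, a i * x i) ν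
      = gaussianReal 0 (Real.toNNReal (∑ i, ∑ j, a i * C i j * a j))

/-- The coordinates of `X` are iid `N(0, v)` random variables. -/
def IIDGaussian {Ω ι : Type*} [MeasurableSpace Ω] [Fintype ι] (P : Measure Ω)
    (X : Ω → ι → ℝ) (v : NNReal) : Prop :=
  Measure.map X P = Measure.pi fun _ : ι => gaussianReal 0 v

/-- Entries of a matrix, as a function on pairs of indices. -/
def matEntries {m n : Type*} (A : Matrix m n ℝ) : m × n → ℝ := fun q => A q.1 q.2

/-- The eigenvalues of a (Hermitian) real matrix, sorted in decreasing order. -/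
def eigsDesc {p : ℕ} (A : Matrix (Fin p) (Fin p) ℝ) : List ℝ :=
  if h : A.IsHermitian then (List.ofFn h.eigenvalues).insertionSort (· ≥ ·) else []

/-- The `i`-th largest eigenvalue of a (Hermitian) real matrix (`i` is 0-based). -/
def ithEigDesc {p : ℕ} (A : Matrix (Fin p) (Fin p) ℝ) (i : ℕ) : ℝ :=
  (eigsDesc A).getD i 0

/-- Lower edge `a_γ = (1 - γ^{-1/2})²` of the Marchenko–Pastur law. -/
def aGamma (γ : ℝ) : ℝ := (1 - 1 / Real.sqrt γ) ^ 2

/-- Upper edge `b_γ = (1 + γ^{-1/2})²` of the Marchenko–Pastur law. -/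
def bGamma (γ : ℝ) : ℝ := (1 + 1 / Real.sqrt γ) ^ 2

/-- Density of the Marchenko–Pastur law with aspect ratio `γ`. -/
def mpDensity (γ t : ℝ) : ℝ :=
  if t ∈ Set.Icc (aGamma γ) (bGamma γ) then
    γ * Real.sqrt ((bGamma γ - t) * (t - aGamma γ)) / (2 * Real.pi * t)
  else 0

/-- The Marchenko–Pastur law with aspect ratio `γ`. -/
def mpMeasure (γ : ℝ) : Measure ℝ :=
  volume.withDensity fun t => ENNReal.ofReal (mpDensity γ t)

/-- Stieltjes transform `m(z) = ∫ (t - z)⁻¹ dFMP_γ(t)` of the Marchenko–Pastur law. -/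
def mpStieltjes (γ z : ℝ) : ℝ := ∫ t, (t - z)⁻¹ ∂(mpMeasure γ)

/-- The spiked low-rank-plus-noise model `X_n = √n U_n D_n V_nᵀ + E_n`
(Assumptions A1–A3, with `s = σ²` the noise variance and without the CLT
assumption on the factor strengths, which is stated separately when needed). -/
structure SpikedModel (k : ℕ) (γ s : ℝ) (p : ℕ → ℕ) (Ω : Type*) [MeasurableSpace Ω]
    (P : Measure Ω) (μ : Fin k → ℝ) where
  U : ∀ n : ℕ, Ω → Matrix (Fin n) (Fin k) ℝ
  V : ∀ n : ℕ, Ω → Matrix (Fin (p n)) (Fin k) ℝ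
  d : ∀ n : ℕ, Ω → Fin k → ℝ
  E : ∀ n : ℕ, Ω → Matrix (Fin n) (Fin (p n)) ℝ
  /- A1 -/
  orthU : ∀ n ω, (U n ω)ᵀ * U n ω = 1
  orthV : ∀ n ω, (V n ω)ᵀ * V n ω = 1
  aspect : Tendsto (fun n : ℕ => Real.sqrt n * ((n : ℝ) / (p n) - γ)) atTop (𝓝 0)
  /- A2 (except for the CLT on the factor strengths) -/
  dpos : ∀ n ω i, 0 < d n ω i
  dstrictanti : ∀ n ω, StrictAnti (d n ω)
  dconv : ∀ᵐ ω ∂P, ∀ i, Tendsto (fun n => d n ω i) atTop (𝓝 (Real.sqrt (μ i)))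
  /- A3 -/
  Egauss : ∀ n, IIDGaussian P (fun ω => matEntries (E n ω)) (Real.toNNReal s)
  Eindep : ∀ n, IndepFun (E n) (fun ω => (U n ω, d n ω, V n ω)) P

/-- The observed data matrix `X_n = √n U_n D_n V_nᵀ + E_n`. -/
def SpikedModel.X {k : ℕ} {γ s : ℝ} {p : ℕ → ℕ} {Ω : Type*} [MeasurableSpace Ω]
    {P : Measure Ω} {μ : Fin k → ℝ} (M : SpikedModel k γ s p Ω P μ) (n : ℕ) (ω : Ω) :
    Matrix (Fin n) (Fin (p n)) ℝ :=
  Real.sqrt n • (M.U n ω * Matrix.diagonal (M.d n ω) * (M.V n ω)ᵀ) + M.E n ω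

/-- `√n Uh (diagonal √μh) Vhᵀ` is the SVD of `X` truncated to the `k` largest terms:
the `μh i` are the `k` largest eigenvalues of `(1/n) Xᵀ X` in decreasing order, the columns
of `Vh` are corresponding orthonormal eigenvectors (right singular vectors), and the columns
of `Uh` are corresponding orthonormal left singular vectors. -/
def IsTruncatedSVD {n q k : ℕ} (X : Matrix (Fin n) (Fin q) ℝ)
    (Uh : Matrix (Fin n) (Fin k) ℝ) (μh : Fin k → ℝ) (Vh : Matrix (Fin q) (Fin k) ℝ) : Prop :=
  Uhᵀ * Uh = 1 ∧ Vhᵀ * Vh = 1 ∧ Antitone μh ∧ (∀ i, 0 ≤ μh i) ∧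
  (∀ i : Fin k, μh i = ithEigDesc ((1 / (n : ℝ)) • (Xᵀ * X)) i) ∧
  (∀ i : Fin k, (Xᵀ * X) *ᵥ (fun j => Vh j i) = ((n : ℝ) * μh i) • fun j => Vh j i) ∧
  (∀ i : Fin k, X *ᵥ (fun j => Vh j i) = (Real.sqrt n * Real.sqrt (μh i)) • fun j => Uh j i)

/-- Almost sure limit `μ̄` of the top sample eigenvalues (`s = σ²`). -/
def muBar (γ s μi : ℝ) : ℝ :=
  if s / Real.sqrt γ < μi then (μi + s) * (1 + s / (γ * μi))
  else s * (1 + 1 / Real.sqrt γ) ^ 2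

/-- Limiting covariance matrix `Σ̄` of the fluctuations of the top sample eigenvalues. -/
def sigmaBar {k : ℕ} (γ s : ℝ) (μ : Fin k → ℝ) (Cmat : Matrix (Fin k) (Fin k) ℝ) :
    Fin k → Fin k → ℝ := fun i j =>
  if s / Real.sqrt γ < μ i ∧ s / Real.sqrt γ < μ j then
    Cmat i j * (1 - s ^ 2 / (γ * (μ i) ^ 2)) * (1 - s ^ 2 / (γ * (μ j) ^ 2))
      + (if i = j then 2 * s * (2 * μ i + (1 + γ⁻¹) * s) * (1 - s ^ 2 / (γ * (μ i) ^ 2)) else 0)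
  else 0

/-- The independent noise blocks `E_{n,12}`, `E_{n,21}` and the scaled Wishart eigenvalues
`Λ_n` appearing after the change of basis. -/
structure NoiseBlocks (k : ℕ) (γ : ℝ) (p : ℕ → ℕ) (Ω : Type*) [MeasurableSpace Ω]
    (P : Measure Ω) where
  E12 : ∀ n : ℕ, Ω → Matrix (Fin k) (Fin (p n - k)) ℝ
  E21 : ∀ n : ℕ, Ω → Matrix (Fin (p n - k)) (Fin k) ℝ
  W : ∀ n : ℕ, Ω → Matrix (Fin (n - k)) (Fin (p n - k)) ℝ
  lam : ∀ n : ℕ, Ω → Fin (p n - k) → ℝ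
  aspect : Tendsto (fun n : ℕ => (n : ℝ) / (p n)) atTop (𝓝 γ)
  pTop : Tendsto p atTop atTop
  E12gauss : ∀ n, IIDGaussian P (fun ω => matEntries (E12 n ω)) 1
  E21gauss : ∀ n, IIDGaussian P (fun ω => matEntries (E21 n ω)) 1
  Wgauss : ∀ n, IIDGaussian P (fun ω => matEntries (W n ω)) 1
  /-- `n λ_{n,α}` are the decreasingly ordered eigenvalues of the white Wishart
  matrix `Wᵀ W`. -/
  lamEig : ∀ n ω, ∀ α : Fin (p n - k), (n : ℝ) * lam n ω α = ithEigDesc ((W n ω)ᵀ * W n ω) α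
  indep1 : ∀ n, IndepFun (E12 n) (fun ω => (E21 n ω, W n ω)) P
  indep2 : ∀ n, IndepFun (E21 n) (W n) P

namespace NoiseBlocks

variable {k : ℕ} {γ : ℝ} {p : ℕ → ℕ} {Ω : Type*} [MeasurableSpace Ω] {P : Measure Ω}

/-- `(1/n) E_{n,12} (Λ_n − z I)⁻¹ E_{n,12}ᵀ`. -/
def q1 (B : NoiseBlocks k γ p Ω P) (n : ℕ) (ω : Ω) (z : ℝ) : Matrix (Fin k) (Fin k) ℝ :=
  (1 / (n : ℝ)) • (B.E12 n ω * (Matrix.diagonal (B.lam n ω) - z • 1)⁻¹ * (B.E12 n ω)ᵀ)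

/-- `(1/n) E_{n,21}ᵀ (Λ_n − z I)⁻¹ E_{n,21}`. -/
def q2 (B : NoiseBlocks k γ p Ω P) (n : ℕ) (ω : Ω) (z : ℝ) : Matrix (Fin k) (Fin k) ℝ :=
  (1 / (n : ℝ)) • ((B.E21 n ω)ᵀ * (Matrix.diagonal (B.lam n ω) - z • 1)⁻¹ * B.E21 n ω)

/-- `(1/n) E_{n,12} (Λ_n − z I)⁻¹ Λ_n^{1/2} E_{n,21}`. -/
def q3 (B : NoiseBlocks k γ p Ω P) (n : ℕ) (ω : Ω) (z : ℝ) : Matrix (Fin k) (Fin k) ℝ :=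
  (1 / (n : ℝ)) • (B.E12 n ω * (Matrix.diagonal (B.lam n ω) - z • 1)⁻¹ *
    Matrix.diagonal (fun α => Real.sqrt (B.lam n ω α)) * B.E21 n ω)

/-- `F_n(z)`. -/
def Fn (B : NoiseBlocks k γ p Ω P) (n : ℕ) (ω : Ω) (z : ℝ) : Matrix (Fin k) (Fin k) ℝ :=
  Real.sqrt n • (B.q1 n ω z - (γ⁻¹ * mpStieltjes γ z) • 1)

/-- `G_n(z)`. -/
def Gn (B : NoiseBlocks k γ p Ω P) (n : ℕ) (ω : Ω) (z : ℝ) : Matrix (Fin k) (Fin k) ℝ :=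
  Real.sqrt n • B.q3 n ω z

/-- `H_n(z)`. -/
def Hn (B : NoiseBlocks k γ p Ω P) (n : ℕ) (ω : Ω) (z : ℝ) : Matrix (Fin k) (Fin k) ℝ :=
  Real.sqrt n • (B.q2 n ω z - (γ⁻¹ * mpStieltjes γ z) • 1)

end NoiseBlocks

/-- The difference quotient `(m(z₁) − m(z₂))/(z₁ − z₂)`, interpreted as `m'(z₁)` when
`z₁ = z₂`: covariance kernel of `F` and `H`. -/
def qFH (γ z₁ z₂ : ℝ) : ℝ :=
  if z₁ = z₂ then deriv (mpStieltjes γ) z₁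
  else (mpStieltjes γ z₁ - mpStieltjes γ z₂) / (z₁ - z₂)

/-- The difference quotient `(z₁ m(z₁) − z₂ m(z₂))/(z₁ − z₂)`, interpreted as
`m(z₁) + z₁ m'(z₁)` when `z₁ = z₂`: covariance kernel of `G`. -/
def qG (γ z₁ z₂ : ℝ) : ℝ :=
  if z₁ = z₂ then mpStieltjes γ z₁ + z₁ * deriv (mpStieltjes γ) z₁
  else (z₁ * mpStieltjes γ z₁ - z₂ * mpStieltjes γ z₂) / (z₁ - z₂)

/-- Covariance function of the limiting Gaussian family
`(F(z_r), G(z_r), H(z_r))_{r}` (index component `Fin 3`: `0 ↦ F`, `1 ↦ G`, `2 ↦ H`);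
it encodes that `F`, `G`, `H` are mutually independent, that `F` and `H` are symmetric,
and that all covariances vanish except the ones prescribed. -/
def covFGH (γ : ℝ) {l k : ℕ} (zs : Fin l → ℝ) :
    Fin l × Fin 3 × Fin k × Fin k → Fin l × Fin 3 × Fin k × Fin k → ℝ := fun q q' =>
  if q.2.1 = q'.2.1 then
    if q.2.1 = 1 then
      γ⁻¹ * qG γ (zs q.1) (zs q'.1) *
        (if q.2.2.1 = q'.2.2.1 ∧ q.2.2.2 = q'.2.2.2 then 1 else 0)
    else
      γ⁻¹ * qFH γ (zs q.1) (zs q'.1) *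
        ((if q.2.2.1 = q'.2.2.1 ∧ q.2.2.2 = q'.2.2.2 then 1 else 0)
          + (if q.2.2.1 = q'.2.2.2 ∧ q.2.2.2 = q'.2.2.1 then 1 else 0))
  else 0

/-- The model after the orthogonal change of basis: the data matrix `X̃_n` has block form
`[[√n D_n + E₁₁, E₁₂], [E₂₁, √n Λ_n^{1/2}], [E₃₁, 0]]`, with all blocks mutually independent,
the `E`-blocks having iid `N(0,1)` entries and `n λ_{n,α}` the decreasingly ordered
eigenvalues of a white Wishart matrix of dimension `p − k` with `n − k` degrees of freedom.
(Monotonicity assumptions on `d` and `μ` are stated separately when needed.) -/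
structure BlockModel (k : ℕ) (γ : ℝ) (p : ℕ → ℕ) (Ω : Type*) [MeasurableSpace Ω]
    (P : Measure Ω) (μ : Fin k → ℝ) where
  d : ∀ n : ℕ, Ω → Fin k → ℝ
  E11 : ∀ n : ℕ, Ω → Matrix (Fin k) (Fin k) ℝ
  E12 : ∀ n : ℕ, Ω → Matrix (Fin k) (Fin (p n - k)) ℝ
  E21 : ∀ n : ℕ, Ω → Matrix (Fin (p n - k)) (Fin k) ℝ
  E31 : ∀ n : ℕ, Ω → Matrix (Fin (n - p n)) (Fin k) ℝ
  W : ∀ n : ℕ, Ω → Matrix (Fin (n - k)) (Fin (p n - k)) ℝ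
  lam : ∀ n : ℕ, Ω → Fin (p n - k) → ℝ
  aspect : Tendsto (fun n : ℕ => Real.sqrt n * ((n : ℝ) / (p n) - γ)) atTop (𝓝 0)
  pTop : Tendsto p atTop atTop
  dpos : ∀ n ω i, 0 < d n ω i
  dconv : ∀ᵐ ω ∂P, ∀ i, Tendsto (fun n => d n ω i) atTop (𝓝 (Real.sqrt (μ i)))
  E11gauss : ∀ n, IIDGaussian P (fun ω => matEntries (E11 n ω)) 1
  E12gauss : ∀ n, IIDGaussian P (fun ω => matEntries (E12 n ω)) 1
  E21gauss : ∀ n, IIDGaussian P (fun ω => matEntries (E21 n ω)) 1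
  E31gauss : ∀ n, IIDGaussian P (fun ω => matEntries (E31 n ω)) 1
  Wgauss : ∀ n, IIDGaussian P (fun ω => matEntries (W n ω)) 1
  lamEig : ∀ n ω, ∀ α : Fin (p n - k), (n : ℝ) * lam n ω α = ithEigDesc ((W n ω)ᵀ * W n ω) α
  indep1 : ∀ n, IndepFun (d n) (fun ω => (E11 n ω, E12 n ω, E21 n ω, E31 n ω, W n ω)) P
  indep2 : ∀ n, IndepFun (E11 n) (fun ω => (E12 n ω, E21 n ω, E31 n ω, W n ω)) P
  indep3 : ∀ n, IndepFun (E12 n) (fun ω => (E21 n ω, E31 n ω, W n ω)) P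
  indep4 : ∀ n, IndepFun (E21 n) (fun ω => (E31 n ω, W n ω)) P
  indep5 : ∀ n, IndepFun (E31 n) (W n) P

namespace BlockModel

variable {k : ℕ} {γ : ℝ} {p : ℕ → ℕ} {Ω : Type*} [MeasurableSpace Ω] {P : Measure Ω}
  {μ : Fin k → ℝ}

/-- Upper-left block `S_{n,11}` of `S_n = (1/n) X̃_nᵀ X̃_n`. -/
def S11 (M : BlockModel k γ p Ω P μ) (n : ℕ) (ω : Ω) : Matrix (Fin k) (Fin k) ℝ :=
  Matrix.diagonal (fun i => (M.d n ω i) ^ 2)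
    + (1 / Real.sqrt n) •
      (Matrix.diagonal (M.d n ω) * M.E11 n ω + (M.E11 n ω)ᵀ * Matrix.diagonal (M.d n ω))
    + (1 / (n : ℝ)) •
      ((M.E11 n ω)ᵀ * M.E11 n ω + (M.E21 n ω)ᵀ * M.E21 n ω + (M.E31 n ω)ᵀ * M.E31 n ω)

/-- Block `S_{n,12}` of `S_n = (1/n) X̃_nᵀ X̃_n`. -/
def S12 (M : BlockModel k γ p Ω P μ) (n : ℕ) (ω : Ω) : Matrix (Fin k) (Fin (p n - k)) ℝ :=
  (1 / Real.sqrt n) • (Matrix.diagonal (M.d n ω) * M.E12 n ω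
      + (M.E21 n ω)ᵀ * Matrix.diagonal (fun α => Real.sqrt (M.lam n ω α)))
    + (1 / (n : ℝ)) • ((M.E11 n ω)ᵀ * M.E12 n ω)

/-- Block `S_{n,21}` of `S_n = (1/n) X̃_nᵀ X̃_n`. -/
def S21 (M : BlockModel k γ p Ω P μ) (n : ℕ) (ω : Ω) : Matrix (Fin (p n - k)) (Fin k) ℝ :=
  (1 / Real.sqrt n) • ((M.E12 n ω)ᵀ * Matrix.diagonal (M.d n ω)
      + Matrix.diagonal (fun α => Real.sqrt (M.lam n ω α)) * M.E21 n ω)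
    + (1 / (n : ℝ)) • ((M.E12 n ω)ᵀ * M.E11 n ω)

/-- Lower-right block `S_{n,22}` of `S_n = (1/n) X̃_nᵀ X̃_n`. -/
def S22 (M : BlockModel k γ p Ω P μ) (n : ℕ) (ω : Ω) :
    Matrix (Fin (p n - k)) (Fin (p n - k)) ℝ :=
  Matrix.diagonal (M.lam n ω) + (1 / (n : ℝ)) • ((M.E12 n ω)ᵀ * M.E12 n ω)

/-- The secular-equation matrix `T_n(z) = S₁₁ − z I − S₁₂ (S₂₂ − z I)⁻¹ S₂₁`. -/
def T (M : BlockModel k γ p Ω P μ) (n : ℕ) (ω : Ω) (z : ℝ) : Matrix (Fin k) (Fin k) ℝ :=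
  M.S11 n ω - z • 1 - M.S12 n ω * (M.S22 n ω - z • 1)⁻¹ * M.S21 n ω

/-- `F_n(z)` in the block model. -/
def Fmat (M : BlockModel k γ p Ω P μ) (n : ℕ) (ω : Ω) (z : ℝ) : Matrix (Fin k) (Fin k) ℝ :=
  Real.sqrt n • ((1 / (n : ℝ)) •
      (M.E12 n ω * (Matrix.diagonal (M.lam n ω) - z • 1)⁻¹ * (M.E12 n ω)ᵀ)
    - (γ⁻¹ * mpStieltjes γ z) • 1)

/-- `G_n(z)` in the block model. -/
def Gmat (M : BlockModel k γ p Ω P μ) (n : ℕ) (ω : Ω) (z : ℝ) : Matrix (Fin k) (Fin k) ℝ :=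
  Real.sqrt n • ((1 / (n : ℝ)) •
    (M.E12 n ω * (Matrix.diagonal (M.lam n ω) - z • 1)⁻¹ *
      Matrix.diagonal (fun α => Real.sqrt (M.lam n ω α)) * M.E21 n ω))

/-- `H_n(z)` in the block model. -/
def Hmat (M : BlockModel k γ p Ω P μ) (n : ℕ) (ω : Ω) (z : ℝ) : Matrix (Fin k) (Fin k) ℝ :=
  Real.sqrt n • ((1 / (n : ℝ)) •
      ((M.E21 n ω)ᵀ * (Matrix.diagonal (M.lam n ω) - z • 1)⁻¹ * M.E21 n ω)
    - (γ⁻¹ * mpStieltjes γ z) • 1)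

/-- `R_n(z) = D_n + n^{-1/2} E₁₁ − n^{-1/2} E₁₂ (S₂₂ − z I)⁻¹ S₂₁`. -/
def Rmat (M : BlockModel k γ p Ω P μ) (n : ℕ) (ω : Ω) (z : ℝ) : Matrix (Fin k) (Fin k) ℝ :=
  Matrix.diagonal (M.d n ω) + (1 / Real.sqrt n) • M.E11 n ω
    - (1 / Real.sqrt n) • (M.E12 n ω * (M.S22 n ω - z • 1)⁻¹ * M.S21 n ω)

/-- Euclidean norm of `x̃ = (x; −(S₂₂ − z I)⁻¹ S₂₁ x)`. -/
def xtNorm (M : BlockModel k γ p Ω P μ) (n : ℕ) (ω : Ω) (z : ℝ) (x : Fin k → ℝ) : ℝ :=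
  Real.sqrt (∑ j, x j ^ 2 +
    ∑ α, ((((M.S22 n ω - z • 1)⁻¹ * M.S21 n ω) *ᵥ x) α) ^ 2)

/-- First `k` components of the left singular vector: `y = R_n(z) x / ‖x̃‖₂`. -/
def yvec (M : BlockModel k γ p Ω P μ) (n : ℕ) (ω : Ω) (z : ℝ) (x : Fin k → ℝ) :
    Fin k → ℝ :=
  (M.xtNorm n ω z x)⁻¹ • (M.Rmat n ω z *ᵥ x)

end BlockModel

/-- The deterministic limit `T₀(z) = (1 + γ⁻¹ m(z))⁻¹ D² + m(z)⁻¹ I` of `T_n(z)`. -/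
def T0lim {k : ℕ} (γ : ℝ) (μ : Fin k → ℝ) (z : ℝ) : Matrix (Fin k) (Fin k) ℝ :=
  (1 + γ⁻¹ * mpStieltjes γ z)⁻¹ • Matrix.diagonal μ + (mpStieltjes γ z)⁻¹ • 1

/-! ### Standard Gaussian arrays -/

section GaussianArray

variable {ι κ l : Type*} [Fintype ι] [Fintype κ] [Fintype l]

/-- The law of an array of independent standard Gaussian variables indexed by `ι`. -/
abbrev gaussianArray (ι : Type*) [Fintype ι] : Measure (ι → ℝ) :=
  Measure.pi fun _ : ι => gaussianReal 0 1

theorem measurePreserving_gaussianArray_of_isometry (T : (ι → ℝ) →ₗ[ℝ] (ι → ℝ))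
    (hT : ∀ x, T x ⬝ᵥ T x = x ⬝ᵥ x) :
    MeasurePreserving T (gaussianArray ι) (gaussianArray ι) := by
  let L : EuclideanSpace ℝ ι →ₗᵢ[ℝ] EuclideanSpace ℝ ι :=
    { toLinearMap := (WithLp.linearEquiv 2 ℝ (ι → ℝ)).symm.toLinearMap ∘ₗ T ∘ₗ
        (WithLp.linearEquiv 2 ℝ (ι → ℝ)).toLinearMap
      norm_map' := fun x => by
        simpa [EuclideanSpace.norm_eq, dotProduct, ← pow_two] using
          congrArg Real.sqrt (hT (WithLp.ofLp x)) }
  let Le := L.toLinearIsometryEquiv rfl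
  have hto : MeasurePreserving (MeasurableEquiv.toLp 2 (ι → ℝ)) (gaussianArray ι)
      (stdGaussian (EuclideanSpace ℝ ι)) :=
    ⟨(MeasurableEquiv.toLp 2 (ι → ℝ)).measurable, map_pi_eq_stdGaussian⟩
  have hLe : MeasurePreserving Le (stdGaussian (EuclideanSpace ℝ ι))
      (stdGaussian (EuclideanSpace ℝ ι)) :=
    ⟨Le.continuous.measurable, stdGaussian_map Le⟩
  exact (hto.symm _).comp (hLe.comp hto)

theorem measurePreserving_gaussianArray_mulVec [DecidableEq ι] {O : Matrix ι ι ℝ}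
    (hO : Oᵀ * O = 1) :
    MeasurePreserving (O *ᵥ ·) (gaussianArray ι) (gaussianArray ι) :=
  measurePreserving_gaussianArray_of_isometry O.mulVecLin fun x => by
    rw [mulVecLin_apply, dotProduct_mulVec, ← mulVec_transpose, mulVec_mulVec, hO, one_mulVec]

theorem measurePreserving_pi_comp_injective {α : Type*} [MeasurableSpace α] (μ : Measure α)
    [IsProbabilityMeasure μ] {f : κ → ι} (hf : f.Injective) :
    MeasurePreserving (fun x : ι → α => x ∘ f) (Measure.pi fun _ => μ)
      (Measure.pi fun _ => μ) := by
  have hind : iIndepFun (fun (i : ι) (x : ι → α) => x i) (Measure.pi fun _ => μ) :=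
    iIndepFun_pi (X := fun _ => id) fun _ => aemeasurable_id
  refine ⟨by fun_prop, ?_⟩
  have h := (iIndepFun_iff_map_fun_eq_pi_map fun k => (measurable_pi_apply (f k)).aemeasurable).1
    (hind.precomp hf)
  simp only [(measurePreserving_eval (fun _ : ι => μ) _).map_eq] at h
  exact h

theorem measurePreserving_pi_comp_prodMk {α : Type*} [MeasurableSpace α] (μ : Measure α)
    [IsProbabilityMeasure μ] {f : κ → ι} {g : l → ι} (hfg : (Sum.elim f g).Injective) :
    MeasurePreserving (fun x : ι → α => (x ∘ f, x ∘ g)) (Measure.pi fun _ => μ)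
      ((Measure.pi fun _ => μ).prod (Measure.pi fun _ => μ)) :=
  (measurePreserving_sumPiEquivProdPi fun _ : κ ⊕ l => μ).comp
    (measurePreserving_pi_comp_injective μ hfg)

end GaussianArray

/-! ### Concentration of Gaussian quadratic forms -/

theorem gaussianPDFReal_smul_exp_centered_sq (t x : ℝ) :
    gaussianPDFReal 0 1 x • Real.exp (t * (x ^ 2 - 1))
      = Real.exp (-t) * (√(2 * Real.pi))⁻¹ * Real.exp (-(1 / 2 - t) * x ^ 2) := by
  simp only [gaussianPDFReal, NNReal.coe_one, mul_one, smul_eq_mul, sub_zero]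
  rw [mul_comm (Real.exp (-t)), mul_assoc, mul_assoc, ← Real.exp_add, ← Real.exp_add]
  ring_nf

theorem integrable_exp_centered_sq_gaussianReal {t : ℝ} (ht : t < 1 / 2) :
    Integrable (fun x : ℝ => Real.exp (t * (x ^ 2 - 1))) (gaussianReal 0 1) := by
  rw [gaussianReal_of_var_ne_zero 0 one_ne_zero,
    integrable_withDensity_iff_integrable_smul₀' (by fun_prop) (by simp [gaussianPDF])]
  simp only [toReal_gaussianPDF, gaussianPDFReal_smul_exp_centered_sq]
  exact (integrable_exp_neg_mul_sq (by linarith)).const_mul _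

theorem integral_exp_centered_sq_gaussianReal {t : ℝ} (ht : t < 1 / 2) :
    ∫ x, Real.exp (t * (x ^ 2 - 1)) ∂(gaussianReal 0 1) = Real.exp (-t) * (√(1 - 2 * t))⁻¹ := by
  have : 0 < 1 / 2 - t := by linarith
  rw [integral_gaussianReal_eq_integral_smul one_ne_zero]
  simp only [gaussianPDFReal_smul_exp_centered_sq]
  rw [integral_const_mul, integral_gaussian, mul_assoc, ← Real.sqrt_inv, ← Real.sqrt_inv,
    ← Real.sqrt_mul (by positivity), show 1 - 2 * t = 2 * (1 / 2 - t) by ring]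
  congr 2
  field_simp

theorem exp_neg_sub_four_mul_sq_le_sqrt {t : ℝ} (ht : |t| ≤ 1 / 4) :
    Real.exp (-t - 4 * t ^ 2) ≤ √(1 - 2 * t) := by
  have hu : |2 * t| ≤ 1 / 2 := by rw [abs_mul, abs_two]; linarith
  have hlog : -(2 * t) - 2 * (2 * t) ^ 2 ≤ Real.log (1 - 2 * t) := by
    have h := Real.abs_log_sub_add_sum_range_le (show |2 * t| < 1 by linarith) 1
    have hrem : |2 * t| ^ (1 + 1) / (1 - |2 * t|) ≤ 2 * (2 * t) ^ 2 := by
      rw [div_le_iff₀ (by linarith), sq_abs]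
      nlinarith [sq_nonneg (2 * t)]
    have := (abs_le.1 (h.trans hrem)).1
    norm_num at this
    linarith
  refine Real.le_sqrt_of_sq_le ?_
  rw [← Real.exp_nat_mul, ← Real.le_log_iff_exp_le (by linarith [(abs_le.1 ht).2])]
  push_cast
  linarith

theorem integral_exp_centered_sq_gaussianReal_le {t : ℝ} (ht : |t| ≤ 1 / 4) :
    ∫ x, Real.exp (t * (x ^ 2 - 1)) ∂(gaussianReal 0 1) ≤ Real.exp (4 * t ^ 2) := by
  have hlt : t < 1 / 2 := by linarith [(abs_le.1 ht).2]
  rw [integral_exp_centered_sq_gaussianReal hlt, ← div_eq_mul_inv,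
    div_le_iff₀ (Real.sqrt_pos.2 (by linarith))]
  calc Real.exp (-t) = Real.exp (4 * t ^ 2) * Real.exp (-t - 4 * t ^ 2) := by
        rw [← Real.exp_add]; ring_nf
    _ ≤ _ := by gcongr; exact exp_neg_sub_four_mul_sq_le_sqrt ht

section QuadraticForm

variable {ι : Type*} [Fintype ι]

theorem gaussianArray_le_sum_mul_centered_sq (d : ι → ℝ) {D t r : ℝ} (hd : ∀ a, |d a| ≤ D)
    (ht : 0 ≤ t) (htD : t * D ≤ 1 / 4) :
    gaussianArray ι {g | r ≤ ∑ a, d a * (g a ^ 2 - 1)}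
      ≤ ENNReal.ofReal (Real.exp (4 * t ^ 2 * D ^ 2 * Fintype.card ι - t * r)) := by
  have hprod (g : ι → ℝ) : Real.exp (t * ∑ a, d a * (g a ^ 2 - 1))
      = ∏ a, Real.exp (t * d a * (g a ^ 2 - 1)) := by
    rw [← Real.exp_sum, Finset.mul_sum]; simp only [mul_assoc]
  have htd (a : ι) : |t * d a| ≤ 1 / 4 := by
    rw [abs_mul, abs_of_nonneg ht]
    exact (mul_le_mul_of_nonneg_left (hd a) ht).trans htD
  have hint : Integrable (fun g : ι → ℝ => Real.exp (t * ∑ a, d a * (g a ^ 2 - 1)))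
      (gaussianArray ι) := by
    simp only [hprod]
    exact Integrable.fintype_prod fun a =>
      integrable_exp_centered_sq_gaussianReal (by linarith [(abs_le.1 (htd a)).2])
  have hmgf : mgf (fun g : ι → ℝ => ∑ a, d a * (g a ^ 2 - 1)) (gaussianArray ι) t
      ≤ Real.exp (4 * t ^ 2 * D ^ 2 * Fintype.card ι) := by
    simp only [mgf, hprod]
    rw [integral_fintype_prod_eq_prod (f := fun a (x : ℝ) => Real.exp (t * d a * (x ^ 2 - 1)))]
    calc _ ≤ ∏ _a : ι, Real.exp (4 * t ^ 2 * D ^ 2) := by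
          refine Finset.prod_le_prod (fun a _ => integral_nonneg fun x => (Real.exp_pos _).le)
            fun a _ => (integral_exp_centered_sq_gaussianReal_le (htd a)).trans ?_
          have : d a ^ 2 ≤ D ^ 2 := sq_le_sq.2 ((hd a).trans (le_abs_self D))
          rw [mul_pow, ← mul_assoc]
          gcongr
      _ = _ := by rw [Finset.prod_const, ← Real.exp_nat_mul, Finset.card_univ]; ring_nf
  refine (ENNReal.le_ofReal_iff_toReal_le (measure_ne_top _ _) (Real.exp_pos _).le).2 ?_
  calc _ ≤ Real.exp (-t * r) * Real.exp (4 * t ^ 2 * D ^ 2 * Fintype.card ι) := by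
        refine (measure_ge_le_exp_mul_mgf r ht hint).trans ?_
        gcongr
    _ = _ := by rw [← Real.exp_add]; ring_nf

/-- `M` has quadratic form bounded by `D`; for Hermitian `M` this says that the spectral norm of
`M` is at most `D`. -/
def QuadFormBound (M : Matrix ι ι ℝ) (D : ℝ) : Prop :=
  ∀ v : ι → ℝ, |v ⬝ᵥ (M *ᵥ v)| ≤ D * (v ⬝ᵥ v)

variable {M : Matrix ι ι ℝ}

theorem dotProduct_mulVec_eq_sum_eigenvalues [DecidableEq ι] (hM : M.IsHermitian)
    (v : ι → ℝ) :
    v ⬝ᵥ (M *ᵥ v)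
      = ∑ a, hM.eigenvalues a * (((hM.eigenvectorUnitary : Matrix ι ι ℝ)ᵀ *ᵥ v) a) ^ 2 := by
  have hspec := hM.spectral_theorem
  simp only [Unitary.conjStarAlgAut_apply, star_eq_conjTranspose,
    conjTranspose_eq_transpose_of_trivial] at hspec
  conv_lhs => rw [hspec]
  rw [← mulVec_mulVec, ← mulVec_mulVec, dotProduct_mulVec, ← mulVec_transpose]
  simp only [dotProduct, mulVec_diagonal, Function.comp_apply, RCLike.ofReal_real_eq_id, id_eq]
  exact Finset.sum_congr rfl fun a _ => by ring

theorem eigenvectorUnitary_transpose_mul_self [DecidableEq ι] (hM : M.IsHermitian) :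
    (hM.eigenvectorUnitary : Matrix ι ι ℝ)ᵀ * hM.eigenvectorUnitary = 1 := by
  simpa [star_eq_conjTranspose] using Unitary.coe_star_mul_self hM.eigenvectorUnitary

theorem abs_eigenvalues_le_of_quadFormBound [DecidableEq ι] (hM : M.IsHermitian) {D : ℝ}
    (hD : QuadFormBound M D) (a : ι) : |hM.eigenvalues a| ≤ D := by
  set U : Matrix ι ι ℝ := (hM.eigenvectorUnitary : Matrix ι ι ℝ)
  have hUv : Uᵀ *ᵥ (U *ᵥ Pi.single a 1) = Pi.single a 1 := by
    rw [mulVec_mulVec, eigenvectorUnitary_transpose_mul_self, one_mulVec]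
  have hnorm : (U *ᵥ Pi.single a 1) ⬝ᵥ (U *ᵥ Pi.single a 1) = 1 := by
    rw [dotProduct_mulVec, ← mulVec_transpose, hUv]
    simp
  have h := hD (U *ᵥ Pi.single a 1)
  rw [dotProduct_mulVec_eq_sum_eigenvalues hM, hUv, hnorm] at h
  simpa [Pi.single_apply] using h

/-- A Hanson–Wright type bound with the Chernoff parameter `t` left free. By the spectral theorem
and rotation invariance the centred form is a weighted sum of independent centred squares. -/
theorem gaussianArray_quadForm_tail (hM : M.IsHermitian) {D t r : ℝ} (hD : QuadFormBound M D)
    (ht : 0 ≤ t) (htD : t * D ≤ 1 / 4) :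
    gaussianArray ι {g | r ≤ |g ⬝ᵥ (M *ᵥ g) - M.trace|}
      ≤ ENNReal.ofReal (2 * Real.exp (4 * t ^ 2 * D ^ 2 * Fintype.card ι - t * r)) := by
  classical
  set U : Matrix ι ι ℝ := (hM.eigenvectorUnitary : Matrix ι ι ℝ)
  set S : (ι → ℝ) → Set (ι → ℝ) := fun d => {g | r ≤ ∑ a, d a * (g a ^ 2 - 1)}
  have hrot : MeasurePreserving (Uᵀ *ᵥ ·) (gaussianArray ι) (gaussianArray ι) :=
    measurePreserving_gaussianArray_mulVec (mul_eq_one_comm.1 (by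
      rw [transpose_transpose, eigenvectorUnitary_transpose_mul_self]))
  have hS (d : ι → ℝ) : MeasurableSet (S d) := measurableSet_le measurable_const (by fun_prop)
  have hform (g : ι → ℝ) : g ⬝ᵥ (M *ᵥ g) - M.trace
      = ∑ a, hM.eigenvalues a * ((Uᵀ *ᵥ g) a ^ 2 - 1) := by
    rw [dotProduct_mulVec_eq_sum_eigenvalues hM, hM.trace_eq_sum_eigenvalues]
    simp [mul_sub, U]
  have hsub : {g | r ≤ |g ⬝ᵥ (M *ᵥ g) - M.trace|}
      ⊆ (Uᵀ *ᵥ ·) ⁻¹' (S hM.eigenvalues ∪ S (-hM.eigenvalues)) := fun g hg => by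
    simpa [S, le_abs, hform] using hg
  calc _ ≤ gaussianArray ι (S hM.eigenvalues ∪ S (-hM.eigenvalues)) := by
        rw [← hrot.measure_preimage ((hS _).union (hS _)).nullMeasurableSet]
        exact measure_mono hsub
    _ ≤ gaussianArray ι (S hM.eigenvalues) + gaussianArray ι (S (-hM.eigenvalues)) :=
        measure_union_le _ _
    _ ≤ _ := by
        have hev := abs_eigenvalues_le_of_quadFormBound hM hD
        rw [two_mul, ENNReal.ofReal_add (Real.exp_pos _).le (Real.exp_pos _).le]
        exact add_le_add (gaussianArray_le_sum_mul_centered_sq _ hev ht htD)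
          (gaussianArray_le_sum_mul_centered_sq _ (by simpa using hev) ht htD)

end QuadraticForm

/-- The optimal Chernoff parameter for deviations `ε N` of a quadratic form bounded by `D` in
dimension at most `C N`, capped so that the exponential moments exist. -/
def chernoffParam (D C ε : ℝ) : ℝ := min (1 / (4 * D)) (ε / (8 * D ^ 2 * C))

theorem chernoffParam_pos {D C ε : ℝ} (hD : 0 < D) (hC : 0 < C) (hε : 0 < ε) :
    0 < chernoffParam D C ε := by
  unfold chernoffParam; positivity

/-- The exponential rate in `gaussianArray_quadForm_le_exp`. -/
def quadFormRate (D C ε : ℝ) : ℝ := chernoffParam D C ε * ε / 2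

theorem quadFormRate_pos {D C ε : ℝ} (hD : 0 < D) (hC : 0 < C) (hε : 0 < ε) :
    0 < quadFormRate D C ε :=
  half_pos (mul_pos (chernoffParam_pos hD hC hε) hε)

theorem gaussianArray_quadForm_le_exp {ι : Type*} [Fintype ι] {M : Matrix ι ι ℝ}
    (hM : M.IsHermitian) {D C ε N : ℝ} (hD : 0 < D) (hC : 0 < C)
    (hε : 0 < ε) (hcard : Fintype.card ι ≤ C * N) (hMD : QuadFormBound M D) :
    gaussianArray ι {g | ε * N ≤ |g ⬝ᵥ (M *ᵥ g) - M.trace|}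
      ≤ ENNReal.ofReal (2 * Real.exp (-quadFormRate D C ε * N)) := by
  set t := chernoffParam D C ε
  have ht0 : 0 < t := chernoffParam_pos hD hC hε
  have htD : t * D ≤ 1 / 4 := by
    have h : t ≤ 1 / (4 * D) := min_le_left _ _
    rw [le_div_iff₀ (by positivity)] at h
    linarith
  have htε : 8 * t * D ^ 2 * C ≤ ε := by
    have h : t ≤ ε / (8 * D ^ 2 * C) := min_le_right _ _
    rw [le_div_iff₀ (by positivity)] at h
    linarith
  have hN : 0 ≤ N := nonneg_of_mul_nonneg_right ((Nat.cast_nonneg _).trans hcard) hC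
  refine (gaussianArray_quadForm_tail hM hMD ht0.le htD).trans (ENNReal.ofReal_le_ofReal ?_)
  gcongr
  calc 4 * t ^ 2 * D ^ 2 * Fintype.card ι - t * (ε * N)
      ≤ 4 * t ^ 2 * D ^ 2 * (C * N) - t * (ε * N) := by gcongr
    _ = t * N * (8 * t * D ^ 2 * C) / 2 - t * ε * N := by ring
    _ ≤ t * N * ε / 2 - t * ε * N := by gcongr
    _ = -quadFormRate D C ε * N := by rw [quadFormRate]; ring

/-! ### Gaussian matrices -/

section Euclidean

variable {ι : Type*} [Fintype ι]

theorem dotProduct_self_nonneg (v : ι → ℝ) : 0 ≤ v ⬝ᵥ v := by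
  simpa using dotProduct_star_self_nonneg v

theorem dotProduct_sq_le (v w : ι → ℝ) : (v ⬝ᵥ w) ^ 2 ≤ (v ⬝ᵥ v) * (w ⬝ᵥ w) := by
  simpa only [dotProduct, ← pow_two] using Finset.sum_mul_sq_le_sq_mul_sq Finset.univ v w

variable [DecidableEq ι]

theorem mulVec_dotProduct_mulVec_of_orthogonal {O : Matrix ι ι ℝ} (hO : Oᵀ * O = 1)
    (x y : ι → ℝ) : (O *ᵥ x) ⬝ᵥ (O *ᵥ y) = x ⬝ᵥ y := by
  rw [dotProduct_mulVec, ← mulVec_transpose, mulVec_mulVec, hO, one_mulVec]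

/-- The Householder reflection `1 - 2 u uᵀ / (uᵀ u)` in the hyperplane orthogonal to `u`. -/
def householder (u : ι → ℝ) : Matrix ι ι ℝ := 1 - (2 / (u ⬝ᵥ u)) • vecMulVec u u

theorem householder_mulVec (u x : ι → ℝ) :
    householder u *ᵥ x = x - (2 * (u ⬝ᵥ x) / (u ⬝ᵥ u)) • u := by
  rw [householder, sub_mulVec, one_mulVec, smul_mulVec, vecMulVec_mulVec]
  congr 1
  ext i
  simp
  ring

theorem householder_transpose_mul_self {u : ι → ℝ} (hu : u ⬝ᵥ u ≠ 0) :
    (householder u)ᵀ * householder u = 1 := by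
  have hsymm : (householder u)ᵀ = householder u := by
    rw [householder, transpose_sub, transpose_one, transpose_smul, transpose_vecMulVec]
  rw [hsymm]
  refine ext_of_mulVec_single fun j => ?_
  rw [← mulVec_mulVec, householder_mulVec, householder_mulVec, one_mulVec, dotProduct_sub,
    dotProduct_smul, smul_eq_mul, div_mul_cancel₀ _ hu]
  ext i
  simp
  field_simp
  ring

theorem exists_orthogonal_mulVec_eq {v w : ι → ℝ} (h : v ⬝ᵥ v = w ⬝ᵥ w) :
    ∃ O : Matrix ι ι ℝ, Oᵀ * O = 1 ∧ O *ᵥ v = w := by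
  obtain rfl | hvw := eq_or_ne v w
  · exact ⟨1, by simp, one_mulVec v⟩
  have hu : (v - w) ⬝ᵥ (v - w) ≠ 0 := fun h0 => hvw (sub_eq_zero.1 (dotProduct_self_eq_zero.1 h0))
  refine ⟨householder (v - w), householder_transpose_mul_self hu, ?_⟩
  have hform : 2 * ((v - w) ⬝ᵥ v) = (v - w) ⬝ᵥ (v - w) := by
    simp only [dotProduct_sub, sub_dotProduct, h, dotProduct_comm v w]
    ring
  rw [householder_mulVec, hform, div_self hu, one_smul, sub_sub_cancel]

theorem exists_orthogonal_mulVec_eq_single (v : ι → ℝ) (i : ι) :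
    ∃ O : Matrix ι ι ℝ, Oᵀ * O = 1 ∧ O *ᵥ v = Pi.single i √(v ⬝ᵥ v) :=
  exists_orthogonal_mulVec_eq (by simp [Real.mul_self_sqrt (dotProduct_self_nonneg v)])

end Euclidean

section GaussianMatrix

variable {m n k l : Type*}

/-- The matrix with the given entries, inverse to `matEntries`. -/
def toMat (g : m × n → ℝ) : Matrix m n ℝ := of fun i j => g (i, j)

theorem measurable_matrix_entry (i : m) (j : n) : Measurable fun W : Matrix m n ℝ => W i j :=
  (measurable_pi_apply j).comp (measurable_pi_apply i)

theorem measurable_toMat : Measurable (toMat : (m × n → ℝ) → Matrix m n ℝ) :=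
  measurable_pi_lambda _ fun i => measurable_pi_lambda _ fun j => measurable_pi_apply (i, j)

instance [Countable m] [Countable n] : BorelSpace (Matrix m n ℝ) :=
  inferInstanceAs (BorelSpace (m → n → ℝ))

instance [Countable m] [Countable n] : SecondCountableTopology (Matrix m n ℝ) :=
  inferInstanceAs (SecondCountableTopology (m → n → ℝ))

variable [Fintype m] [Fintype n] [Fintype k] [Fintype l]

/-- The law of an `m × n` matrix with independent standard Gaussian entries. -/
def gaussianMatrix (m n : Type*) [Fintype m] [Fintype n] : Measure (Matrix m n ℝ) :=
  (gaussianArray (m × n)).map toMat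

theorem measurePreserving_toMat :
    MeasurePreserving toMat (gaussianArray (m × n)) (gaussianMatrix m n) :=
  ⟨measurable_toMat, rfl⟩

instance : IsProbabilityMeasure (gaussianMatrix m n) :=
  Measure.isProbabilityMeasure_map measurable_toMat.aemeasurable

theorem measurePreserving_gaussianMatrix_transpose :
    MeasurePreserving (fun W : Matrix m n ℝ => Wᵀ) (gaussianMatrix m n) (gaussianMatrix n m) :=
  .map_of_comp (measurePreserving_toMat.comp
    (measurePreserving_pi_comp_injective (gaussianReal 0 1) Prod.swap_injective))
    (by fun_prop) measurable_toMat

theorem measurePreserving_gaussianMatrix_orthogonal_mul [DecidableEq m] {O : Matrix m m ℝ}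
    (hO : Oᵀ * O = 1) :
    MeasurePreserving (fun W : Matrix m n ℝ => O * W) (gaussianMatrix m n)
      (gaussianMatrix m n) := by
  let T : (m × n → ℝ) →ₗ[ℝ] (m × n → ℝ) :=
    { toFun := fun g => matEntries (O * toMat g)
      map_add' := fun g h => by
        ext q; simp [matEntries, toMat, mul_apply, mul_add, Finset.sum_add_distrib]
      map_smul' := fun c g => by
        ext q; simp [matEntries, toMat, mul_apply, Finset.mul_sum, mul_left_comm] }
  have hcol (h : m × n → ℝ) : h ⬝ᵥ h = ∑ j, (fun i => h (i, j)) ⬝ᵥ (fun i => h (i, j)) := by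
    simp only [dotProduct]
    rw [Fintype.sum_prod_type, Finset.sum_comm]
  have hT : MeasurePreserving T (gaussianArray (m × n)) (gaussianArray (m × n)) :=
    measurePreserving_gaussianArray_of_isometry T fun g => by
      rw [hcol, hcol]
      exact Finset.sum_congr rfl fun j _ => mulVec_dotProduct_mulVec_of_orthogonal hO
        (fun i => g (i, j)) (fun i => g (i, j))
  exact .map_of_comp (measurePreserving_toMat.comp hT)
    (Continuous.matrix_mul continuous_const continuous_id).measurable measurable_toMat

theorem measurePreserving_gaussianMatrix_mul_orthogonal [DecidableEq n] {O : Matrix n n ℝ}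
    (hO : Oᵀ * O = 1) :
    MeasurePreserving (fun W : Matrix m n ℝ => W * Oᵀ) (gaussianMatrix m n)
      (gaussianMatrix m n) := by
  convert measurePreserving_gaussianMatrix_transpose.comp
    ((measurePreserving_gaussianMatrix_orthogonal_mul hO).comp
      measurePreserving_gaussianMatrix_transpose) using 2 with W
  simp

theorem measurePreserving_gaussianMatrix_row_submatrix {i : m} {f : k → m} (hf : f.Injective)
    (hi : ∀ a, f a ≠ i) :
    MeasurePreserving (fun W : Matrix m n ℝ => (W i, W.submatrix f id)) (gaussianMatrix m n)
      ((gaussianArray n).prod (gaussianMatrix k n)) := by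
  have hinj : (Sum.elim (fun j : n => (i, j)) (fun q : k × n => (f q.1, q.2))).Injective := by
    rintro (j | ⟨a, j⟩) (j' | ⟨a', j'⟩) h <;> simp_all [hf.eq_iff, eq_comm]
  exact .map_of_comp (((MeasurePreserving.id _).prod measurePreserving_toMat).comp
    (measurePreserving_pi_comp_prodMk (gaussianReal 0 1) hinj)) (by fun_prop) measurable_toMat

theorem measurePreserving_gaussianMatrix_col_submatrix {j : n} {f : l → n} (hf : f.Injective)
    (hj : ∀ a, f a ≠ j) :
    MeasurePreserving (fun W : Matrix m n ℝ => (fun i => W i j, W.submatrix id f))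
      (gaussianMatrix m n) ((gaussianArray m).prod (gaussianMatrix m l)) :=
  ((MeasurePreserving.id _).prod measurePreserving_gaussianMatrix_transpose).comp
    ((measurePreserving_gaussianMatrix_row_submatrix hf hj).comp
      measurePreserving_gaussianMatrix_transpose)

end GaussianMatrix

theorem measure_prod_le_add_of_section_le {X Y : Type*} [MeasurableSpace X] [MeasurableSpace Y]
    {μ : Measure X} {ν : Measure Y} [IsProbabilityMeasure μ] [IsProbabilityMeasure ν]
    {B : Set (X × Y)} (hB : MeasurableSet B) {A : Set X} (hA : MeasurableSet A) {η : ENNReal}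
    (h : ∀ x ∉ A, ν (Prod.mk x ⁻¹' B) ≤ η) : (μ.prod ν) B ≤ μ A + η := by
  rw [Measure.prod_apply hB]
  calc ∫⁻ x, ν (Prod.mk x ⁻¹' B) ∂μ ≤ ∫⁻ x, (A.indicator 1 x + η) ∂μ := by
        refine lintegral_mono fun x => ?_
        by_cases hx : x ∈ A
        · simp only [hx, Set.indicator_of_mem, Pi.one_apply]
          exact prob_le_one.trans le_self_add
        · simpa [hx] using h x hx
    _ = _ := by
        rw [lintegral_add_right _ measurable_const, lintegral_indicator_one hA]; simp

/-! ### Upper edge of Gaussian matrices -/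

section SqNormBound

variable {m n k : Type*} [Fintype m] [Fintype n] [Fintype k] {W : Matrix m n ℝ} {α β b b' : ℝ}
  {e : n → ℝ}

/-- The operator norm of `W` satisfies `‖W‖² ≤ b`. -/
def SqNormBound (W : Matrix m n ℝ) (b : ℝ) : Prop :=
  ∀ y : n → ℝ, (W *ᵥ y) ⬝ᵥ (W *ᵥ y) ≤ b * (y ⬝ᵥ y)

theorem SqNormBound.mono (hW : SqNormBound W b) (h : b ≤ b') : SqNormBound W b' :=
  fun y => (hW y).trans (mul_le_mul_of_nonneg_right h (dotProduct_self_nonneg y))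

theorem measurableSet_sqNormBound (b : ℝ) : MeasurableSet {W : Matrix m n ℝ | SqNormBound W b} := by
  simp only [SqNormBound, Set.ofPred_forall]
  exact (isClosed_iInter fun y => isClosed_le (by fun_prop) continuous_const).measurableSet

/-- A strengthening of `‖W‖ ≤ α + β` that distinguishes a direction `e`. The additional term makes
the condition stable under bordering `W` by a column of norm at most `α` and a row of norm at most
`β`, see `EdgeBound.cons`. -/
def EdgeBound (α β : ℝ) (e : n → ℝ) (W : Matrix m n ℝ) : Prop :=
  ∀ y : n → ℝ, (W *ᵥ y) ⬝ᵥ (W *ᵥ y) + (β ^ 2 + α * β) * (e ⬝ᵥ y) ^ 2 ≤ (α + β) ^ 2 * (y ⬝ᵥ y)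

theorem edgeBound_zero_iff : EdgeBound α β 0 W ↔ SqNormBound W ((α + β) ^ 2) := by
  simp [EdgeBound, SqNormBound]

theorem measurableSet_edgeBound {X : Type*} [TopologicalSpace X] [MeasurableSpace X]
    [OpensMeasurableSpace X] {e : X → n → ℝ} {W : X → Matrix m n ℝ} (he : Continuous e)
    (hW : Continuous W) (α β : ℝ) : MeasurableSet {x | EdgeBound α β (e x) (W x)} := by
  simp only [EdgeBound, Set.ofPred_forall]
  exact (isClosed_iInter fun y => isClosed_le (by fun_prop) continuous_const).measurableSet

theorem edgeBound_of_isEmpty_rows [IsEmpty m] (hα : 0 ≤ α) (hβ : 0 ≤ β) (he : e ⬝ᵥ e ≤ 1) :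
    EdgeBound α β e W := fun y => by
  have hy := dotProduct_self_nonneg y
  have hey : (e ⬝ᵥ y) ^ 2 ≤ y ⬝ᵥ y :=
    (dotProduct_sq_le e y).trans (mul_le_of_le_one_left hy he)
  calc (W *ᵥ y) ⬝ᵥ (W *ᵥ y) + (β ^ 2 + α * β) * (e ⬝ᵥ y) ^ 2
      = (β ^ 2 + α * β) * (e ⬝ᵥ y) ^ 2 := by simp [dotProduct]
    _ ≤ (β ^ 2 + α * β) * (y ⬝ᵥ y) := by gcongr
    _ ≤ (α + β) ^ 2 * (y ⬝ᵥ y) := by gcongr; nlinarith [mul_nonneg hα hβ]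

theorem edgeBound_of_isEmpty_cols [IsEmpty n] : EdgeBound α β e W := fun y => by
  simp [mulVec, dotProduct]

/-- If `O e` is a multiple of the unit vector at `j`, the bound along `e` follows from the one along
that unit vector for `W Oᵀ`. -/
theorem EdgeBound.of_mul_orthogonal [DecidableEq n] (hα : 0 ≤ α) (hβ : 0 ≤ β) (he : e ⬝ᵥ e ≤ 1)
    {O : Matrix n n ℝ} (hO : Oᵀ * O = 1) {j : n} (hOe : O *ᵥ e = Pi.single j √(e ⬝ᵥ e))
    (h : EdgeBound α β (Pi.single j 1) (W * Oᵀ)) : EdgeBound α β e W := fun y => by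
  have hy := h (O *ᵥ y)
  rw [mulVec_mulVec, Matrix.mul_assoc, hO, Matrix.mul_one,
    mulVec_dotProduct_mulVec_of_orthogonal hO] at hy
  have hey : e ⬝ᵥ y = √(e ⬝ᵥ e) * ((Pi.single j 1 : n → ℝ) ⬝ᵥ (O *ᵥ y)) := by
    rw [← mulVec_dotProduct_mulVec_of_orthogonal hO, hOe]
    simp
  refine le_trans ?_ hy
  rw [hey, mul_pow, Real.sq_sqrt (dotProduct_self_nonneg e)]
  gcongr
  exact mul_le_of_le_one_left (sq_nonneg _) he

end SqNormBound

section Bordering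

variable {n p : ℕ} {α β : ℝ}

theorem cons_rows_mulVec (w : Fin n → ℝ) (H : Matrix (Fin n) (Fin p) ℝ) (y : Fin (p + 1) → ℝ) :
    (of fun i => Fin.cons (w i) (H i) : Matrix (Fin n) (Fin (p + 1)) ℝ) *ᵥ y
      = y 0 • w + H *ᵥ (y ∘ Fin.succ) := by
  ext i
  simp [mulVec, dotProduct, Fin.sum_univ_succ, mul_comm]

/-- After a rotation `O` aligning the column `w` with the first basis vector, the square of the norm
of the bordered matrix applied to `y` decouples into the first row and the remaining rows. -/
theorem cons_rows_mulVec_dotProduct_self {w : Fin (n + 1) → ℝ}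
    {O : Matrix (Fin (n + 1)) (Fin (n + 1)) ℝ} (hO : Oᵀ * O = 1)
    (hOw : O *ᵥ w = Pi.single 0 √(w ⬝ᵥ w)) (H : Matrix (Fin (n + 1)) (Fin p) ℝ)
    (y : Fin (p + 1) → ℝ) :
    ((of fun i => Fin.cons (w i) (H i) : Matrix (Fin (n + 1)) (Fin (p + 1)) ℝ) *ᵥ y)
        ⬝ᵥ ((of fun i => Fin.cons (w i) (H i) : Matrix (Fin (n + 1)) (Fin (p + 1)) ℝ) *ᵥ y)
      = (y 0 * √(w ⬝ᵥ w) + (O * H) 0 ⬝ᵥ (y ∘ Fin.succ)) ^ 2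
        + ((O * H).submatrix Fin.succ id *ᵥ (y ∘ Fin.succ))
          ⬝ᵥ ((O * H).submatrix Fin.succ id *ᵥ (y ∘ Fin.succ)) := by
  rw [← mulVec_dotProduct_mulVec_of_orthogonal hO, cons_rows_mulVec, mulVec_add, mulVec_smul, hOw,
    mulVec_mulVec]
  rw [dotProduct, Fin.sum_univ_succ, pow_two]
  simp [dotProduct, mulVec]

theorem EdgeBound.cons (hβ : 0 < β) {w : Fin (n + 1) → ℝ} (hw : √(w ⬝ᵥ w) ≤ α)
    {O : Matrix (Fin (n + 1)) (Fin (n + 1)) ℝ} (hO : Oᵀ * O = 1)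
    (hOw : O *ᵥ w = Pi.single 0 √(w ⬝ᵥ w)) {H : Matrix (Fin (n + 1)) (Fin p) ℝ}
    (h : EdgeBound α β (β⁻¹ • (O * H) 0) ((O * H).submatrix Fin.succ id)) :
    EdgeBound α β (Pi.single 0 1)
      (of fun i => Fin.cons (w i) (H i) : Matrix (Fin (n + 1)) (Fin (p + 1)) ℝ) := fun y => by
  have hyy : y ⬝ᵥ y = y 0 ^ 2 + (y ∘ Fin.succ) ⬝ᵥ (y ∘ Fin.succ) := by
    simp [dotProduct, Fin.sum_univ_succ, pow_two]
  have hH := h (y ∘ Fin.succ)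
  rw [smul_dotProduct, smul_eq_mul] at hH
  rw [cons_rows_mulVec_dotProduct_self hO hOw, hyy, single_one_dotProduct]
  set s := √(w ⬝ᵥ w)
  set t := β⁻¹ * ((O * H) 0 ⬝ᵥ (y ∘ Fin.succ)) with ht
  have hs : 0 ≤ s := Real.sqrt_nonneg _
  have hrt : (O * H) 0 ⬝ᵥ (y ∘ Fin.succ) = β * t := by rw [ht]; field_simp
  have hsq : s ^ 2 * y 0 ^ 2 ≤ α ^ 2 * y 0 ^ 2 := by gcongr
  have hcross : 2 * (s * β) * (y 0 * t) ≤ α * β * (y 0 ^ 2 + t ^ 2) :=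
    calc 2 * (s * β) * (y 0 * t) ≤ s * β * (y 0 ^ 2 + t ^ 2) := by
          nlinarith [mul_nonneg (mul_nonneg hs hβ.le) (sq_nonneg (y 0 - t))]
      _ ≤ α * β * (y 0 ^ 2 + t ^ 2) := by gcongr
  rw [hrt]
  nlinarith

theorem measurableSet_normSq_gt {ι : Type*} [Fintype ι] (a : ℝ) :
    MeasurableSet {x : ι → ℝ | a < x ⬝ᵥ x} :=
  measurableSet_lt measurable_const
    (Continuous.dotProduct continuous_id continuous_id).measurable

theorem gaussianMatrix_not_edgeBound_cons_le (hα : 0 ≤ α) (hβ : 0 < β) {δ η : ENNReal}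
    (hδ : gaussianArray (Fin p) {x | β ^ 2 < x ⬝ᵥ x} ≤ δ)
    (hη : ∀ e : Fin p → ℝ, e ⬝ᵥ e ≤ 1 →
      gaussianMatrix (Fin n) (Fin p) {H | ¬ EdgeBound α β e H} ≤ η)
    {w : Fin (n + 1) → ℝ} (hw : w ⬝ᵥ w ≤ α ^ 2) :
    gaussianMatrix (Fin (n + 1)) (Fin p) {H | ¬ EdgeBound α β (Pi.single 0 1)
      (of fun i => Fin.cons (w i) (H i) : Matrix (Fin (n + 1)) (Fin (p + 1)) ℝ)} ≤ δ + η := by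
  obtain ⟨O, hO, hOw⟩ := exists_orthogonal_mulVec_eq_single w 0
  set Bad : Set ((Fin p → ℝ) × Matrix (Fin n) (Fin p) ℝ) :=
    {q | ¬ EdgeBound α β (β⁻¹ • q.1) q.2}
  have hBad : MeasurableSet Bad :=
    (measurableSet_edgeBound (by fun_prop) (by fun_prop) α β).compl
  have hsplit := (measurePreserving_gaussianMatrix_row_submatrix (n := Fin p)
    (Fin.succ_injective n) Fin.succ_ne_zero).comp
      (measurePreserving_gaussianMatrix_orthogonal_mul hO)
  have hsub : {H : Matrix (Fin (n + 1)) (Fin p) ℝ | ¬ EdgeBound α β (Pi.single 0 1)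
      (of fun i => Fin.cons (w i) (H i) : Matrix (Fin (n + 1)) (Fin (p + 1)) ℝ)} ⊆
      (fun H => ((O * H) 0, (O * H).submatrix Fin.succ id)) ⁻¹' Bad := by
    intro H hH
    simp only [Bad, Set.mem_preimage, Set.mem_ofPred_eq] at hH ⊢
    exact mt (EdgeBound.cons hβ ((Real.sqrt_le_left hα).2 hw) hO hOw) hH
  have hsection : ∀ r ∉ {x : Fin p → ℝ | β ^ 2 < x ⬝ᵥ x},
      gaussianMatrix (Fin n) (Fin p) (Prod.mk r ⁻¹' Bad) ≤ η := fun r hr => by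
    have hr' : (β⁻¹ • r) ⬝ᵥ (β⁻¹ • r) ≤ 1 := by
      rw [smul_dotProduct, dotProduct_smul, smul_eq_mul, smul_eq_mul, ← mul_assoc, ← mul_inv,
        ← pow_two, inv_mul_le_iff₀ (by positivity)]
      simpa using hr
    simpa only [Bad, Set.preimage_ofPred_eq] using hη (β⁻¹ • r) hr'
  calc _ ≤ _ := measure_mono hsub
    _ ≤ ((gaussianArray (Fin p)).prod (gaussianMatrix (Fin n) (Fin p))) Bad :=
        hsplit.measure_preimage_le Bad
    _ ≤ δ + η := (measure_prod_le_add_of_section_le hBad (measurableSet_normSq_gt (β ^ 2))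
        hsection).trans (by gcongr)

theorem gaussianMatrix_not_edgeBound_single_le (hα : 0 ≤ α) (hβ : 0 < β) {δ η : ENNReal}
    (hα' : gaussianArray (Fin (n + 1)) {x | α ^ 2 < x ⬝ᵥ x} ≤ δ)
    (hβ' : gaussianArray (Fin p) {x | β ^ 2 < x ⬝ᵥ x} ≤ δ)
    (hη : ∀ e : Fin p → ℝ, e ⬝ᵥ e ≤ 1 →
      gaussianMatrix (Fin n) (Fin p) {H | ¬ EdgeBound α β e H} ≤ η) :
    gaussianMatrix (Fin (n + 1)) (Fin (p + 1)) {G | ¬ EdgeBound α β (Pi.single 0 1) G}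
      ≤ δ + (δ + η) := by
  set Bad : Set ((Fin (n + 1) → ℝ) × Matrix (Fin (n + 1)) (Fin p) ℝ) :=
    {q | ¬ EdgeBound α β (Pi.single 0 1)
      (of fun i => Fin.cons (q.1 i) (q.2 i) : Matrix (Fin (n + 1)) (Fin (p + 1)) ℝ)}
  have hBad : MeasurableSet Bad := by
    refine (measurableSet_edgeBound continuous_const ?_ α β).compl
    refine continuous_matrix fun i j => ?_
    refine Fin.cases ?_ (fun j => ?_) j <;> simp only [of_apply, Fin.cons_zero, Fin.cons_succ] <;>
      fun_prop
  have hsplit := measurePreserving_gaussianMatrix_col_submatrix (m := Fin (n + 1))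
    (Fin.succ_injective p) Fin.succ_ne_zero
  have hpre : {G | ¬ EdgeBound α β (Pi.single 0 1) G}
      = (fun G : Matrix (Fin (n + 1)) (Fin (p + 1)) ℝ =>
          (fun i => G i 0, G.submatrix id Fin.succ)) ⁻¹' Bad := by
    ext G
    have hG : (of fun i => Fin.cons (G i 0) (G.submatrix id Fin.succ i)) = G := by
      ext i j
      refine Fin.cases ?_ (fun j => ?_) j <;> simp
    simp only [Bad, Set.mem_preimage, Set.mem_ofPred_eq, hG]
  rw [hpre]
  exact (hsplit.measure_preimage_le _).trans ((measure_prod_le_add_of_section_le hBad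
    (measurableSet_normSq_gt (α ^ 2)) fun w hw => gaussianMatrix_not_edgeBound_cons_le hα hβ hβ' hη
      (by simpa using hw)).trans (by gcongr))

/-- Each of the `n` rows costs the probability that a Gaussian column is longer than `α` or a
Gaussian row longer than `β`. -/
theorem gaussianMatrix_not_edgeBound_le (hα : 0 ≤ α) (hβ : 0 < β) {δ : ENNReal} (n : ℕ) :
    ∀ p : ℕ, (∀ n' ≤ n, gaussianArray (Fin n') {x | α ^ 2 < x ⬝ᵥ x} ≤ δ) →
      (∀ p' ≤ p, gaussianArray (Fin p') {x | β ^ 2 < x ⬝ᵥ x} ≤ δ) →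
      ∀ e : Fin p → ℝ, e ⬝ᵥ e ≤ 1 →
        gaussianMatrix (Fin n) (Fin p) {G | ¬ EdgeBound α β e G} ≤ n * (2 * δ) := by
  induction n with
  | zero => exact fun p _ _ e he => by simp [edgeBound_of_isEmpty_rows hα hβ.le he]
  | succ n ih =>
    rintro (_ | p) hcol hrow e he
    · simp [edgeBound_of_isEmpty_cols]
    obtain ⟨O, hO, hOe⟩ := exists_orthogonal_mulVec_eq_single e 0
    have hsub : {G | ¬ EdgeBound α β e G} ⊆ (fun G : Matrix (Fin (n + 1)) (Fin (p + 1)) ℝ =>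
        G * Oᵀ) ⁻¹' {G | ¬ EdgeBound α β (Pi.single 0 1) G} :=
      fun G hG hq => hG (hq.of_mul_orthogonal hα hβ.le he hO hOe)
    calc _ ≤ gaussianMatrix (Fin (n + 1)) (Fin (p + 1)) {G | ¬ EdgeBound α β (Pi.single 0 1) G} :=
          (measure_mono hsub).trans
            ((measurePreserving_gaussianMatrix_mul_orthogonal hO).measure_preimage_le _)
      _ ≤ δ + (δ + n * (2 * δ)) :=
          gaussianMatrix_not_edgeBound_single_le hα hβ (hcol _ le_rfl) (hrow p p.le_succ)
            (ih p (fun n' hn' => hcol n' (Nat.le_succ_of_le hn'))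
              fun p' hp' => hrow p' (Nat.le_succ_of_le hp'))
      _ = _ := by push_cast; ring

end Bordering

theorem gaussianArray_normSq_gt_le {ι : Type*} [Fintype ι] {C τ ε N : ℝ} (hC : 0 < C) (hτ : τ ≤ C)
    (hε : 0 < ε) (hN : 0 ≤ N) (hcard : Fintype.card ι ≤ τ * N) :
    gaussianArray ι {x | N * (τ + ε) < x ⬝ᵥ x}
      ≤ ENNReal.ofReal (2 * Real.exp (-quadFormRate 1 C ε * N)) := by
  classical
  refine (measure_mono fun x hx => ?_).trans (gaussianArray_quadForm_le_exp (M := 1)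
    isHermitian_one one_pos hC hε (hcard.trans (by gcongr)) fun v => ?_)
  · simp only [Set.mem_ofPred_eq, one_mulVec, trace_one] at hx ⊢
    exact le_trans (by linarith) (le_abs_self _)
  · rw [one_mulVec, one_mul, abs_of_nonneg (dotProduct_self_nonneg v)]

theorem gaussianMatrix_not_sqNormBound_le {ρ ε x : ℝ} (hρ : 0 < ρ) (hε : 0 < ε) (hx : 0 < x)
    {N p : ℕ} (hN : N ≤ x) (hp : p ≤ ρ * x) :
    gaussianMatrix (Fin N) (Fin p) {W | ¬ SqNormBound W (x * (√(1 + ε) + √(ρ + ε)) ^ 2)}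
      ≤ ENNReal.ofReal (4 * x * Real.exp (-quadFormRate 1 (max 1 ρ) ε * x)) := by
  set δ := 2 * Real.exp (-quadFormRate 1 (max 1 ρ) ε * x)
  set α := √(x * (1 + ε))
  set β := √(x * (ρ + ε))
  have hC : 0 < max 1 ρ := by positivity
  have hα : α ^ 2 = x * (1 + ε) := Real.sq_sqrt (by positivity)
  have hβ : β ^ 2 = x * (ρ + ε) := Real.sq_sqrt (by positivity)
  have hsum : x * (√(1 + ε) + √(ρ + ε)) ^ 2 = (α + β) ^ 2 := by
    simp only [α, β, Real.sqrt_mul hx.le]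
    rw [← mul_add, mul_pow, Real.sq_sqrt hx.le]
  have hedge := gaussianMatrix_not_edgeBound_le (δ := ENNReal.ofReal δ) (Real.sqrt_nonneg _ : 0 ≤ α)
    (Real.sqrt_pos.2 (by positivity) : 0 < β) N p
    (fun n' hn' => by rw [hα]; exact gaussianArray_normSq_gt_le hC (le_max_left _ _) hε hx.le (by
      rw [Fintype.card_fin, one_mul]; exact (Nat.cast_le.2 hn').trans hN))
    (fun p' hp' => by rw [hβ]; exact gaussianArray_normSq_gt_le hC (le_max_right _ _) hε hx.le (by
      rw [Fintype.card_fin]; exact (Nat.cast_le.2 hp').trans hp)) 0 (by simp)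
  simp only [edgeBound_zero_iff] at hedge
  rw [← hsum] at hedge
  calc _ ≤ N * (2 * ENNReal.ofReal δ) := hedge
    _ = ENNReal.ofReal (N * (2 * δ)) := by
        rw [ENNReal.ofReal_mul N.cast_nonneg, ENNReal.ofReal_natCast,
          ENNReal.ofReal_mul zero_le_two (q := δ), ENNReal.ofReal_ofNat]
    _ ≤ _ := by
        refine ENNReal.ofReal_le_ofReal ?_
        calc N * (2 * δ) ≤ x * (2 * δ) := by gcongr
          _ = _ := by ring

/-! ### Resolvents and removal of a row -/

section Coercive

variable {ι : Type*} [Fintype ι] [DecidableEq ι] {S : Matrix ι ι ℝ} {d : ℝ}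

theorem isUnit_det_of_coercive (hd : 0 < d) (h : ∀ v, d * (v ⬝ᵥ v) ≤ v ⬝ᵥ (S *ᵥ v)) :
    IsUnit S.det := by
  refine isUnit_iff_ne_zero.2 fun h0 => ?_
  obtain ⟨v, hv, hSv⟩ := exists_mulVec_eq_zero_iff.2 h0
  have hle := h v
  rw [hSv, dotProduct_zero] at hle
  exact hv (dotProduct_self_eq_zero.1
    ((nonpos_of_mul_nonpos_right hle hd).antisymm (dotProduct_self_nonneg v)))

theorem mulVec_inv_mulVec_of_coercive (hd : 0 < d) (h : ∀ v, d * (v ⬝ᵥ v) ≤ v ⬝ᵥ (S *ᵥ v))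
    (v : ι → ℝ) : S *ᵥ (S⁻¹ *ᵥ v) = v := by
  rw [mulVec_mulVec, mul_nonsing_inv _ (isUnit_det_of_coercive hd h), one_mulVec]

theorem mul_inv_mulVec_dotProduct_self_le (hd : 0 < d)
    (h : ∀ v, d * (v ⬝ᵥ v) ≤ v ⬝ᵥ (S *ᵥ v)) (v : ι → ℝ) :
    d * ((S⁻¹ *ᵥ v) ⬝ᵥ (S⁻¹ *ᵥ v)) ≤ v ⬝ᵥ (S⁻¹ *ᵥ v) := by
  have hle := h (S⁻¹ *ᵥ v)
  rwa [mulVec_inv_mulVec_of_coercive hd h, dotProduct_comm _ v] at hle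

theorem dotProduct_inv_mulVec_nonneg (hd : 0 < d) (h : ∀ v, d * (v ⬝ᵥ v) ≤ v ⬝ᵥ (S *ᵥ v))
    (v : ι → ℝ) : 0 ≤ v ⬝ᵥ (S⁻¹ *ᵥ v) :=
  (mul_nonneg hd.le (dotProduct_self_nonneg _)).trans (mul_inv_mulVec_dotProduct_self_le hd h v)

theorem dotProduct_inv_mulVec_le (hd : 0 < d) (h : ∀ v, d * (v ⬝ᵥ v) ≤ v ⬝ᵥ (S *ᵥ v))
    (v : ι → ℝ) : v ⬝ᵥ (S⁻¹ *ᵥ v) ≤ d⁻¹ * (v ⬝ᵥ v) := by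
  have hself := mul_inv_mulVec_dotProduct_self_le hd h v
  have hcs := dotProduct_sq_le v (S⁻¹ *ᵥ v)
  have hv := dotProduct_self_nonneg v
  rw [le_inv_mul_iff₀ hd]
  rcases (dotProduct_inv_mulVec_nonneg hd h v).eq_or_lt with h0 | hpos
  · rw [← h0, mul_zero]
    exact hv
  · refine le_of_mul_le_mul_right ?_ hpos
    nlinarith

theorem quadFormBound_inv_of_coercive (hd : 0 < d) (h : ∀ v, d * (v ⬝ᵥ v) ≤ v ⬝ᵥ (S *ᵥ v)) :
    QuadFormBound S⁻¹ d⁻¹ := fun v => by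
  rw [abs_of_nonneg (dotProduct_inv_mulVec_nonneg hd h v)]
  exact dotProduct_inv_mulVec_le hd h v

theorem inv_mulVec_dotProduct_self_le (hd : 0 < d) (h : ∀ v, d * (v ⬝ᵥ v) ≤ v ⬝ᵥ (S *ᵥ v))
    (v : ι → ℝ) : (S⁻¹ *ᵥ v) ⬝ᵥ (S⁻¹ *ᵥ v) ≤ (d⁻¹) ^ 2 * (v ⬝ᵥ v) := by
  rw [pow_two, mul_assoc, le_inv_mul_iff₀ hd]
  exact (mul_inv_mulVec_dotProduct_self_le hd h v).trans (dotProduct_inv_mulVec_le hd h v)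

end Coercive

section GramResolvent

variable {m n : Type*} [Fintype m] [Fintype n] {x B : ℝ} {W : Matrix m n ℝ}

theorem SqNormBound.row_dotProduct_self_le (hB : 0 ≤ B) (hW : SqNormBound W B) (i : m) :
    W i ⬝ᵥ W i ≤ B := by
  have hsq : (W i ⬝ᵥ W i) ^ 2 ≤ (W *ᵥ W i) ⬝ᵥ (W *ᵥ W i) := by
    rw [pow_two]
    exact Finset.single_le_sum (f := fun a => (W *ᵥ W i) a * (W *ᵥ W i) a)
      (fun a _ => mul_self_nonneg _) (Finset.mem_univ i)
  rcases (dotProduct_self_nonneg (W i)).eq_or_lt with h0 | hpos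
  · rwa [← h0]
  · refine le_of_mul_le_mul_right ?_ hpos
    rw [← pow_two]
    exact hsq.trans (hW (W i))

variable [DecidableEq n]

/-- The resolvent `(x - WᵀW)⁻¹` of the Gram matrix of `W`. The sign is chosen such that it is
positive definite when `x` exceeds `‖W‖²`. -/
def gramResolvent (x : ℝ) (W : Matrix m n ℝ) : Matrix n n ℝ := (x • 1 - Wᵀ * W)⁻¹

theorem gramResolvent_transpose (x : ℝ) (W : Matrix m n ℝ) :
    (gramResolvent x W)ᵀ = gramResolvent x W := by
  simp [gramResolvent, transpose_nonsing_inv, transpose_sub, transpose_mul]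

theorem SqNormBound.coercive_sub_gram (hW : SqNormBound W B) (v : n → ℝ) :
    (x - B) * (v ⬝ᵥ v) ≤ v ⬝ᵥ ((x • 1 - Wᵀ * W) *ᵥ v) := by
  have hform : v ⬝ᵥ ((x • 1 - Wᵀ * W) *ᵥ v) = x * (v ⬝ᵥ v) - (W *ᵥ v) ⬝ᵥ (W *ᵥ v) := by
    rw [sub_mulVec, dotProduct_sub, smul_mulVec, one_mulVec, dotProduct_smul, smul_eq_mul,
      dotProduct_mulVec (W *ᵥ v), ← mulVec_transpose, mulVec_mulVec, dotProduct_comm v (_ *ᵥ v)]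
  linarith [hW v]

theorem sum_row_dotProduct_gramResolvent (hxB : B < x) (hW : SqNormBound W B) :
    ∑ i, W i ⬝ᵥ (gramResolvent x W *ᵥ W i)
      = x * (gramResolvent x W).trace - Fintype.card n := by
  have htrace : ∑ i, W i ⬝ᵥ (gramResolvent x W *ᵥ W i) = (W * (gramResolvent x W * Wᵀ)).trace := by
    simp only [trace, diag_apply, Matrix.mul_apply, dotProduct, mulVec, transpose_apply]
  have hinv : gramResolvent x W * (x • 1 - Wᵀ * W) = 1 :=
    nonsing_inv_mul _ (isUnit_det_of_coercive (sub_pos.2 hxB) hW.coercive_sub_gram)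
  have hgram : gramResolvent x W * (Wᵀ * W) = x • gramResolvent x W - 1 := by
    rw [Matrix.mul_sub, Matrix.mul_smul, Matrix.mul_one] at hinv
    rw [← hinv, sub_sub_cancel]
  rw [htrace, trace_mul_comm, Matrix.mul_assoc, hgram, trace_sub, trace_smul, trace_one,
    smul_eq_mul]

end GramResolvent

section DropRow

variable {m n : Type*}

/-- The matrix `W` without its row `i`. -/
def dropRow (W : Matrix m n ℝ) (i : m) : Matrix {a // a ≠ i} n ℝ := W.submatrix Subtype.val id

variable [Fintype m] [DecidableEq m] {W : Matrix m n ℝ} {x B : ℝ}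

theorem gram_eq_dropRow_add (W : Matrix m n ℝ) (i : m) :
    Wᵀ * W = (dropRow W i)ᵀ * dropRow W i + vecMulVec (W i) (W i) := by
  ext a c
  simp only [mul_apply, transpose_apply, Matrix.add_apply, vecMulVec_apply, dropRow,
    submatrix_apply, id]
  rw [Fintype.sum_eq_add_sum_subtype_ne _ i, add_comm]

variable [Fintype n]

theorem SqNormBound.dropRow (hW : SqNormBound W B) (i : m) : SqNormBound (dropRow W i) B := by
  refine fun y => le_trans ?_ (hW y)
  rw [dotProduct, dotProduct, Fintype.sum_eq_add_sum_subtype_ne _ i]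
  exact le_add_of_nonneg_left (mul_self_nonneg _)

variable [DecidableEq n]

theorem gramResolvent_sub_dropRow (hxB : B < x) (hW : SqNormBound W B) (i : m) :
    gramResolvent x W - gramResolvent x (dropRow W i)
      = gramResolvent x W * vecMulVec (W i) (W i) * gramResolvent x (dropRow W i) := by
  have hu := isUnit_det_of_coercive (sub_pos.2 hxB) hW.coercive_sub_gram
  have hu' := isUnit_det_of_coercive (sub_pos.2 hxB) (hW.dropRow i).coercive_sub_gram
  have hrow : vecMulVec (W i) (W i)
      = (x • 1 - (dropRow W i)ᵀ * dropRow W i) - (x • 1 - Wᵀ * W) := by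
    rw [gram_eq_dropRow_add W i]
    abel
  rw [hrow, Matrix.mul_sub, Matrix.sub_mul, gramResolvent, gramResolvent, Matrix.mul_assoc,
    mul_nonsing_inv _ hu', Matrix.mul_one, nonsing_inv_mul _ hu, Matrix.one_mul]

/-- Sherman–Morrison: the quadratic form of the resolvent at a row of `W` is determined by that of
the resolvent with this row removed, which is independent of the row for Gaussian `W`. -/
theorem one_add_gramResolvent_mul_one_sub_dropRow (hxB : B < x) (hW : SqNormBound W B) (i : m) :
    (1 + W i ⬝ᵥ (gramResolvent x W *ᵥ W i))
      * (1 - W i ⬝ᵥ (gramResolvent x (dropRow W i) *ᵥ W i)) = 1 := by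
  have hform := congrArg (fun M : Matrix n n ℝ => W i ⬝ᵥ (M *ᵥ W i))
    (gramResolvent_sub_dropRow hxB hW i)
  simp only [sub_mulVec, dotProduct_sub, ← mulVec_mulVec, vecMulVec_mulVec, op_smul_eq_smul,
    mulVec_smul, dotProduct_smul, smul_eq_mul] at hform
  linarith

theorem abs_trace_gramResolvent_sub_dropRow_le (hB : 0 ≤ B) (hxB : B < x) (hW : SqNormBound W B)
    (i : m) :
    |(gramResolvent x W).trace - (gramResolvent x (dropRow W i)).trace| ≤ B / (x - B) ^ 2 := by
  have hd := sub_pos.2 hxB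
  have hrow := hW.row_dotProduct_self_le hB i
  have htrace : (gramResolvent x W).trace - (gramResolvent x (dropRow W i)).trace
      = (gramResolvent x (dropRow W i) *ᵥ W i) ⬝ᵥ (gramResolvent x W *ᵥ W i) := by
    rw [← trace_sub, gramResolvent_sub_dropRow hxB hW, Matrix.mul_vecMulVec, Matrix.vecMulVec_mul,
      trace_vecMulVec, ← mulVec_transpose, gramResolvent_transpose, dotProduct_comm]
  have hbound {k : Type _} [Fintype k] {V : Matrix k n ℝ} (hV : SqNormBound V B) :
      (gramResolvent x V *ᵥ W i) ⬝ᵥ (gramResolvent x V *ᵥ W i) ≤ B / (x - B) ^ 2 :=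
    (inv_mulVec_dotProduct_self_le hd hV.coercive_sub_gram (W i)).trans (by
      rw [div_eq_inv_mul, inv_pow]; gcongr)
  rw [htrace]
  refine abs_le_of_sq_le_sq ((dotProduct_sq_le _ _).trans ?_) (by positivity)
  rw [pow_two (_ / _)]
  exact mul_le_mul (hbound (hW.dropRow i)) (hbound hW) (dotProduct_self_nonneg _) (by positivity)

/-- The deviation of the quadratic form at each row of the resolvent without that row from its
expectation for a standard Gaussian row. -/
def looError (x : ℝ) (W : Matrix m n ℝ) (i : m) : ℝ :=
  W i ⬝ᵥ (gramResolvent x (dropRow W i) *ᵥ W i) - (gramResolvent x (dropRow W i)).trace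

theorem abs_one_add_gramResolvent_mul_one_sub_trace_le (hB : 0 ≤ B) (hxB : B < x)
    (hW : SqNormBound W B) (i : m) :
    |(1 + W i ⬝ᵥ (gramResolvent x W *ᵥ W i)) * (1 - (gramResolvent x W).trace) - 1|
      ≤ (‖looError x W‖ + B / (x - B) ^ 2) * (1 + B / (x - B)) := by
  have hd := sub_pos.2 hxB
  have hsm := one_add_gramResolvent_mul_one_sub_dropRow hxB hW i
  have hloo : |looError x W i| ≤ ‖looError x W‖ := norm_le_pi_norm (looError x W) i
  have htrace := abs_trace_gramResolvent_sub_dropRow_le hB hxB hW i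
  have hnonneg := dotProduct_inv_mulVec_nonneg hd hW.coercive_sub_gram (W i)
  have hle : W i ⬝ᵥ (gramResolvent x W *ᵥ W i) ≤ B / (x - B) :=
    (dotProduct_inv_mulVec_le hd hW.coercive_sub_gram (W i)).trans (by
      rw [div_eq_inv_mul]
      gcongr
      exact hW.row_dotProduct_self_le hB i)
  rw [← gramResolvent] at hnonneg
  set h := W i ⬝ᵥ (gramResolvent x W *ᵥ W i)
  set T := (gramResolvent x W).trace
  set T' := (gramResolvent x (dropRow W i)).trace
  have hsplit : (1 + h) * (1 - T) - 1 = (looError x W i - (T - T')) * (1 + h) := by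
    rw [looError]
    linear_combination hsm
  rw [hsplit, abs_mul, abs_of_nonneg (by linarith : 0 ≤ 1 + h)]
  gcongr
  exact (abs_sub _ _).trans (add_le_add hloo htrace)

/-- The Marchenko–Pastur equation holds up to the leave-one-out errors. -/
theorem abs_trace_gramResolvent_equation_le (hB : 0 ≤ B) (hxB : B < x) (hW : SqNormBound W B) :
    |(1 - (gramResolvent x W).trace) * (x * (gramResolvent x W).trace - Fintype.card n)
        - Fintype.card m * (gramResolvent x W).trace|
      ≤ Fintype.card m * ((‖looError x W‖ + B / (x - B) ^ 2) * (1 + B / (x - B))) := by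
  have hsum : (1 - (gramResolvent x W).trace) * (x * (gramResolvent x W).trace - Fintype.card n)
        - Fintype.card m * (gramResolvent x W).trace
      = ∑ i, ((1 + W i ⬝ᵥ (gramResolvent x W *ᵥ W i)) * (1 - (gramResolvent x W).trace) - 1) := by
    rw [Finset.sum_sub_distrib, ← Finset.sum_mul, Finset.sum_add_distrib,
      sum_row_dotProduct_gramResolvent hxB hW]
    simp only [Finset.sum_const, Finset.card_univ, nsmul_eq_mul, mul_one]
    ring
  rw [hsum]
  refine (Finset.abs_sum_le_sum_abs _ _).trans ((Finset.sum_le_sum fun i _ =>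
    abs_one_add_gramResolvent_mul_one_sub_trace_le hB hxB hW i).trans_eq ?_)
  simp

end DropRow

section Concentration

variable {m n : Type*} [Fintype m] [Fintype n] [DecidableEq n]

theorem measurable_inv_entry {X : Type*} [MeasurableSpace X] {f : X → Matrix n n ℝ}
    (hf : Measurable f) (i j : n) : Measurable fun x => (f x)⁻¹ i j := by
  have hdet : Measurable (Matrix.det : Matrix n n ℝ → ℝ) := continuous_id.matrix_det.measurable
  simp only [inv_def, Matrix.smul_apply, Ring.inverse_eq_inv', smul_eq_mul]
  exact (hdet.comp hf).inv.mul ((measurable_matrix_entry i j).comp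
    ((continuous_id.matrix_adjugate).measurable.comp hf))

theorem measurable_gramResolvent_entry (x : ℝ) (i j : n) :
    Measurable fun W : Matrix m n ℝ => gramResolvent x W i j :=
  measurable_inv_entry (f := fun W : Matrix m n ℝ => x • 1 - Wᵀ * W)
    (Continuous.measurable (by fun_prop)) i j

theorem gaussianArray_dotProduct_gramResolvent_le {W : Matrix m n ℝ} {x B N δ C ε : ℝ} (hN : 0 < N)
    (hδ : 0 < δ) (hx : B + δ * N ≤ x) (hC : 0 < C) (hε : 0 < ε) (hcard : Fintype.card n ≤ C * N)
    (hW : SqNormBound W B) :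
    gaussianArray n {g | ε ≤ |g ⬝ᵥ (gramResolvent x W *ᵥ g) - (gramResolvent x W).trace|}
      ≤ ENNReal.ofReal (2 * Real.exp (-quadFormRate δ⁻¹ C ε * N)) := by
  have hd : 0 < x - B := by linarith [mul_pos hδ hN]
  have hsymm : (N • gramResolvent x W).IsHermitian := by
    rw [IsHermitian, conjTranspose_eq_transpose_of_trivial, transpose_smul,
      gramResolvent_transpose]
  have hbound : QuadFormBound (N • gramResolvent x W) δ⁻¹ := fun v => by
    have hN' : N * (x - B)⁻¹ ≤ δ⁻¹ := by
      rw [← div_eq_mul_inv, div_le_iff₀ hd, le_inv_mul_iff₀ hδ]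
      linarith
    rw [smul_mulVec, dotProduct_smul, smul_eq_mul, abs_mul, abs_of_pos hN]
    calc N * |v ⬝ᵥ (gramResolvent x W *ᵥ v)| ≤ N * ((x - B)⁻¹ * (v ⬝ᵥ v)) := by
          gcongr
          exact quadFormBound_inv_of_coercive hd hW.coercive_sub_gram v
      _ ≤ δ⁻¹ * (v ⬝ᵥ v) := by
          rw [← mul_assoc]
          exact mul_le_mul_of_nonneg_right hN' (dotProduct_self_nonneg v)
  refine le_trans (measure_mono fun g hg => ?_)
    (gaussianArray_quadForm_le_exp hsymm (inv_pos.2 hδ) hC hε hcard hbound)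
  simp only [Set.mem_ofPred_eq, smul_mulVec, dotProduct_smul, trace_smul, smul_eq_mul] at hg ⊢
  rw [← mul_sub, abs_mul, abs_of_pos hN, mul_comm ε]
  gcongr

/-- Conditionally on the other rows, the row `i` is Gaussian and the resolvent without that row is
deterministic. -/
theorem gaussianMatrix_looError_apply_le [DecidableEq m] {x B N δ C ε : ℝ} (hN : 0 < N)
    (hδ : 0 < δ) (hx : B + δ * N ≤ x) (hC : 0 < C) (hε : 0 < ε) (hcard : Fintype.card n ≤ C * N)
    (i : m) :
    gaussianMatrix m n {W | SqNormBound W B ∧ ε ≤ |looError x W i|}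
      ≤ ENNReal.ofReal (2 * Real.exp (-quadFormRate δ⁻¹ C ε * N)) := by
  set Bad : Set (Matrix {a // a ≠ i} n ℝ × (n → ℝ)) := {q | SqNormBound q.1 B ∧
    ε ≤ |q.2 ⬝ᵥ (gramResolvent x q.1 *ᵥ q.2) - (gramResolvent x q.1).trace|}
  have hBad : MeasurableSet Bad := by
    have hent : ∀ a c, Measurable fun q : Matrix {a // a ≠ i} n ℝ × (n → ℝ) =>
        gramResolvent x q.1 a c :=
      fun a c => (measurable_gramResolvent_entry x a c).comp measurable_fst
    have herr : Measurable fun q : Matrix {a // a ≠ i} n ℝ × (n → ℝ) =>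
        q.2 ⬝ᵥ (gramResolvent x q.1 *ᵥ q.2) - (gramResolvent x q.1).trace := by
      simp only [dotProduct, mulVec, trace, diag_apply]
      fun_prop
    exact (measurable_fst (measurableSet_sqNormBound B)).inter
      (measurableSet_le measurable_const herr.abs)
  have hsplit := Measure.measurePreserving_swap.comp
    (measurePreserving_gaussianMatrix_row_submatrix (n := n) Subtype.val_injective
      (fun a : {a // a ≠ i} => a.2))
  have hsub : {W : Matrix m n ℝ | SqNormBound W B ∧ ε ≤ |looError x W i|} ⊆
      (Prod.swap ∘ fun W => (W i, W.submatrix Subtype.val id)) ⁻¹' Bad :=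
    fun W hW => ⟨hW.1.dropRow i, hW.2⟩
  have hsection : ∀ V ∉ (∅ : Set (Matrix {a // a ≠ i} n ℝ)),
      gaussianArray n (Prod.mk V ⁻¹' Bad)
        ≤ ENNReal.ofReal (2 * Real.exp (-quadFormRate δ⁻¹ C ε * N)) := fun V _ => by
    by_cases hV : SqNormBound V B
    · exact (measure_mono fun g hg => hg.2).trans
        (gaussianArray_dotProduct_gramResolvent_le hN hδ hx hC hε hcard hV)
    · simp [Bad, hV]
  calc _ ≤ _ := measure_mono hsub
    _ ≤ ((gaussianMatrix {a // a ≠ i} n).prod (gaussianArray n)) Bad :=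
        hsplit.measure_preimage_le Bad
    _ ≤ _ := (measure_prod_le_add_of_section_le hBad MeasurableSet.empty hsection).trans_eq
        (by simp)

theorem gaussianMatrix_looError_le [DecidableEq m] {x B N δ C ε : ℝ} (hN : 0 < N)
    (hδ : 0 < δ) (hx : B + δ * N ≤ x) (hC : 0 < C) (hε : 0 < ε) (hcard : Fintype.card n ≤ C * N) :
    gaussianMatrix m n {W | SqNormBound W B ∧ ε ≤ ‖looError x W‖}
      ≤ Fintype.card m * ENNReal.ofReal (2 * Real.exp (-quadFormRate δ⁻¹ C ε * N)) := by
  have hsub : {W : Matrix m n ℝ | SqNormBound W B ∧ ε ≤ ‖looError x W‖}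
      ⊆ ⋃ i, {W | SqNormBound W B ∧ ε ≤ |looError x W i|} := fun W hW => by
    by_contra hlt
    simp only [Set.mem_iUnion, Set.mem_ofPred_eq, not_exists, not_and, not_le] at hlt
    exact hW.2.not_gt ((pi_norm_lt_iff hε).2 fun i => hlt i hW.1)
  calc _ ≤ ∑ i, gaussianMatrix m n {W | SqNormBound W B ∧ ε ≤ |looError x W i|} :=
        (measure_mono hsub).trans (measure_iUnion_fintype_le _ _)
    _ ≤ ∑ _i : m, ENNReal.ofReal (2 * Real.exp (-quadFormRate δ⁻¹ C ε * N)) :=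
        Finset.sum_le_sum fun i _ => gaussianMatrix_looError_apply_le hN hδ hx hC hε hcard i
    _ = _ := by simp

end Concentration

/-! ### Stieltjes transform of the Marchenko–Pastur law -/

section SinSqKernel

variable {q θ : ℝ}

/-- The kernel `sin² θ / |1 + q e^{iθ}|²`, into which the integrand of the Marchenko–Pastur
Stieltjes transform decomposes after the substitution `t = 1 + q² - 2 q cos θ`. -/
def sinSqKernel (q θ : ℝ) : ℝ := Real.sin θ ^ 2 / (1 + 2 * q * Real.cos θ + q ^ 2)

theorem one_add_mul_cos_pos (hq : |q| < 1) : 0 < 1 + q * Real.cos θ := by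
  have hlt : |q * Real.cos θ| < 1 := by
    rw [abs_mul]
    exact (mul_le_of_le_one_right (abs_nonneg _) (Real.abs_cos_le_one θ)).trans_lt hq
  linarith [neg_lt_of_abs_lt hlt]

theorem one_add_two_mul_cos_add_sq (q θ : ℝ) :
    1 + 2 * q * Real.cos θ + q ^ 2 = (1 + q * Real.cos θ) ^ 2 + (q * Real.sin θ) ^ 2 := by
  linear_combination (-q ^ 2) * Real.sin_sq_add_cos_sq θ

theorem one_add_two_mul_cos_add_sq_pos (hq : |q| < 1) : 0 < 1 + 2 * q * Real.cos θ + q ^ 2 := by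
  have := one_add_mul_cos_pos (θ := θ) hq
  rw [one_add_two_mul_cos_add_sq]
  positivity

theorem continuous_sinSqKernel (hq : |q| < 1) : Continuous (sinSqKernel q) :=
  Continuous.div (by fun_prop) (by fun_prop) fun _ => (one_add_two_mul_cos_add_sq_pos hq).ne'

theorem hasDerivAt_sinSqKernel_primitive (hq : |q| < 1) (hq0 : q ≠ 0) (θ : ℝ) :
    HasDerivAt (fun θ => θ / 2 + (1 - q ^ 2) / (2 * q ^ 2)
      * Real.arctan (q * Real.sin θ / (1 + q * Real.cos θ)) - Real.sin θ / (2 * q))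
      (sinSqKernel q θ) θ := by
  have hpos := one_add_mul_cos_pos (θ := θ) hq
  have hD := (one_add_two_mul_cos_add_sq_pos (θ := θ) hq).ne'
  have hsin := Real.hasDerivAt_sin θ
  have hquot := (hsin.const_mul q).fun_div
    (((Real.hasDerivAt_cos θ).const_mul q).const_add 1) hpos.ne'
  refine ((((hasDerivAt_id' θ).div_const 2).fun_add
    (hquot.arctan.const_mul ((1 - q ^ 2) / (2 * q ^ 2)))).fun_sub
      (hsin.div_const (2 * q))).congr_deriv ?_
  have harctan : 1 + (q * Real.sin θ / (1 + q * Real.cos θ)) ^ 2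
      = (1 + 2 * q * Real.cos θ + q ^ 2) / (1 + q * Real.cos θ) ^ 2 := by
    rw [one_add_two_mul_cos_add_sq]
    field_simp
  rw [harctan, sinSqKernel, Real.sin_sq]
  field_simp
  rw [Real.sin_sq]
  ring

theorem integral_sinSqKernel_of_abs_lt_one (hq : |q| < 1) :
    ∫ θ in (0 : ℝ)..Real.pi, sinSqKernel q θ = Real.pi / 2 := by
  obtain rfl | hq0 := eq_or_ne q 0
  · simp [sinSqKernel, integral_sin_sq]
  rw [intervalIntegral.integral_eq_sub_of_hasDerivAt
    (fun θ _ => hasDerivAt_sinSqKernel_primitive hq hq0 θ)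
    ((continuous_sinSqKernel hq).intervalIntegrable _ _)]
  simp

/-- For `|q| = 1` the kernel has a removable singularity at an end of `[0, π]`. -/
theorem sinSqKernel_of_sq_eq_one (hq : q ^ 2 = 1) (hθ : θ ∈ Set.Ioo 0 Real.pi) :
    sinSqKernel q θ = 1 / 2 - q / 2 * Real.cos θ := by
  have hsin := Real.sin_pos_of_mem_Ioo hθ
  have hsc := Real.sin_sq_add_cos_sq θ
  have hD : 1 + 2 * q * Real.cos θ + q ^ 2 ≠ 0 := by
    rw [one_add_two_mul_cos_add_sq, mul_pow, hq, one_mul]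
    positivity
  rw [sinSqKernel, div_eq_iff hD]
  linear_combination hsc + (1 / 2 * q * Real.cos θ - 1 / 2 + Real.cos θ ^ 2) * hq

theorem integral_sinSqKernel (hq : |q| ≤ 1) :
    ∫ θ in (0 : ℝ)..Real.pi, sinSqKernel q θ = Real.pi / 2 := by
  obtain hlt | heq := hq.lt_or_eq
  · exact integral_sinSqKernel_of_abs_lt_one hlt
  have hq2 : q ^ 2 = 1 := by rw [← sq_abs, heq, one_pow]
  rw [intervalIntegral.integral_congr_Ioo_of_le Real.pi_pos.le
      fun θ hθ => sinSqKernel_of_sq_eq_one hq2 hθ,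
    intervalIntegral.integral_sub (by simp) (Continuous.intervalIntegrable (by fun_prop) _ _),
    intervalIntegral.integral_const_mul]
  simp
  ring

theorem intervalIntegrable_sinSqKernel (hq : |q| ≤ 1) :
    IntervalIntegrable (sinSqKernel q) volume 0 Real.pi := by
  by_contra h
  have hzero := intervalIntegral.integral_undef h
  rw [integral_sinSqKernel hq] at hzero
  linarith [Real.pi_pos]

end SinSqKernel

section MarchenkoPastur

variable {γ q z κ s r : ℝ}

theorem image_sub_mul_cos_Icc (hr : 0 < r) :
    (fun θ => s - r * Real.cos θ) '' Set.Icc 0 Real.pi = Set.Icc (s - r) (s + r) := by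
  ext t
  constructor
  · rintro ⟨θ, _, rfl⟩
    constructor <;> nlinarith [Real.neg_one_le_cos θ, Real.cos_le_one θ]
  · rintro ⟨hl, hu⟩
    refine ⟨Real.arccos ((s - t) / r), ⟨Real.arccos_nonneg _, Real.arccos_le_pi _⟩, ?_⟩
    simp only
    rw [Real.cos_arccos (by rw [le_div_iff₀ hr]; linarith) (by rw [div_le_iff₀ hr]; linarith),
      mul_div_cancel₀ _ hr.ne', sub_sub_cancel]

theorem setIntegral_Icc_eq_integral_mul_sin (hr : 0 < r) (g : ℝ → ℝ) :
    ∫ t in Set.Icc (s - r) (s + r), g t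
      = ∫ θ in (0 : ℝ)..Real.pi, r * Real.sin θ * g (s - r * Real.cos θ) := by
  have hderiv (θ : ℝ) : HasDerivAt (fun θ => s - r * Real.cos θ) (r * Real.sin θ) θ :=
    (((Real.hasDerivAt_cos θ).const_mul r).const_sub s).congr_deriv (by ring)
  have hinj : Set.InjOn (fun θ => s - r * Real.cos θ) (Set.Icc 0 Real.pi) := fun θ hθ θ' hθ' h =>
    Real.injOn_cos hθ hθ' (mul_left_cancel₀ hr.ne' (sub_right_injective h))
  rw [← image_sub_mul_cos_Icc hr, integral_image_eq_integral_abs_deriv_smul measurableSet_Icc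
    (fun θ _ => (hderiv θ).hasDerivWithinAt) hinj, intervalIntegral.integral_of_le Real.pi_pos.le,
    ← integral_Icc_eq_integral_Ioc]
  refine setIntegral_congr_fun measurableSet_Icc fun θ hθ => ?_
  simp only [smul_eq_mul]
  rw [abs_of_nonneg (mul_nonneg hr.le (Real.sin_nonneg_of_mem_Icc hθ))]

theorem mpDensity_nonneg (hγ : 0 ≤ γ) (t : ℝ) : 0 ≤ mpDensity γ t := by
  unfold mpDensity
  split_ifs with h
  · have : 0 ≤ t := (sq_nonneg _).trans h.1
    positivity
  · exact le_rfl

theorem mpStieltjes_eq_setIntegral (hγ : 0 ≤ γ) (z : ℝ) :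
    mpStieltjes γ z = ∫ t in Set.Icc (aGamma γ) (bGamma γ),
      γ * √((bGamma γ - t) * (t - aGamma γ)) / (2 * Real.pi * t) * (t - z)⁻¹ := by
  have hmeas : Measurable (mpDensity γ) :=
    Measurable.ite measurableSet_Icc (by fun_prop) measurable_const
  rw [mpStieltjes, mpMeasure, integral_withDensity_eq_integral_toReal_smul hmeas.ennreal_ofReal
    (by simp), ← integral_indicator measurableSet_Icc]
  refine integral_congr_ae (ae_of_all _ fun t => ?_)
  simp only [ENNReal.toReal_ofReal (mpDensity_nonneg hγ t), smul_eq_mul]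
  rw [Set.indicator_apply, mpDensity]
  split_ifs <;> simp

/-- The integrand after the substitution `t = 1 + q² - 2 q cos θ`, split into partial fractions. -/
theorem mp_integrand_eq_sinSqKernel (hq : 0 < q) (hκ : q < κ) (hz : z = (κ + 1) * (κ + q ^ 2) / κ)
    {θ : ℝ} (hθ : θ ∈ Set.Icc 0 Real.pi) :
    2 * q * Real.sin θ * ((q ^ 2)⁻¹ * √((1 + q ^ 2 + 2 * q - (1 + q ^ 2 - 2 * q * Real.cos θ))
        * (1 + q ^ 2 - 2 * q * Real.cos θ - (1 + q ^ 2 - 2 * q)))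
        / (2 * Real.pi * (1 + q ^ 2 - 2 * q * Real.cos θ))
        * (1 + q ^ 2 - 2 * q * Real.cos θ - z)⁻¹)
      = 2 / (Real.pi * z) * (-(1 / κ) * sinSqKernel (q / κ) θ - sinSqKernel (-q) θ) := by
  have hκ0 : 0 < κ := hq.trans hκ
  have hz0 : 0 < z := by rw [hz]; positivity
  have hsin : 0 ≤ Real.sin θ := Real.sin_nonneg_of_mem_Icc hθ
  have hsqrt : √((1 + q ^ 2 + 2 * q - (1 + q ^ 2 - 2 * q * Real.cos θ))
      * (1 + q ^ 2 - 2 * q * Real.cos θ - (1 + q ^ 2 - 2 * q))) = 2 * q * Real.sin θ := by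
    rw [show (1 + q ^ 2 + 2 * q - (1 + q ^ 2 - 2 * q * Real.cos θ))
        * (1 + q ^ 2 - 2 * q * Real.cos θ - (1 + q ^ 2 - 2 * q)) = (2 * q * Real.sin θ) ^ 2 by
      linear_combination (-4 * q ^ 2) * Real.sin_sq_add_cos_sq θ]
    exact Real.sqrt_sq (by positivity)
  have hE : 0 < 1 + 2 * (q / κ) * Real.cos θ + (q / κ) ^ 2 :=
    one_add_two_mul_cos_add_sq_pos (by rwa [abs_of_pos (by positivity), div_lt_one hκ0])
  have ht : 1 + 2 * (-q) * Real.cos θ + (-q) ^ 2 = 1 + q ^ 2 - 2 * q * Real.cos θ := by ring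
  have hzt : z = 1 + q ^ 2 - 2 * q * Real.cos θ
      + κ * (1 + 2 * (q / κ) * Real.cos θ + (q / κ) ^ 2) := by
    rw [hz]
    field_simp
    ring
  have hsin0 : 1 + q ^ 2 - 2 * q * Real.cos θ = 0 → Real.sin θ = 0 := fun h0 => by
    rw [← ht, one_add_two_mul_cos_add_sq] at h0
    have hsq : (-q * Real.sin θ) ^ 2 = 0 := by nlinarith [sq_nonneg (1 + -q * Real.cos θ)]
    simpa [hq.ne'] using hsq
  rw [hsqrt, sinSqKernel, sinSqKernel, ht]
  set t := 1 + q ^ 2 - 2 * q * Real.cos θ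
  set E := 1 + 2 * (q / κ) * Real.cos θ + (q / κ) ^ 2
  have htz : t - z = -(κ * E) := by linarith
  -- For `q = 1` the denominator `t` vanishes at `θ = 0`, and so does the numerator.
  by_cases ht0 : t = 0
  · simp [hsin0 ht0]
  · have hπ := Real.pi_ne_zero
    rw [htz]
    field_simp
    rw [hzt]
    ring

/-- Closed form of the Marchenko–Pastur Stieltjes transform outside the bulk, in the
parametrization `z = (κ + 1)(κ + γ⁻¹) / κ` with `κ > γ^{-1/2}`. -/
theorem inv_mul_mpStieltjes_eq (hγ : 1 ≤ γ) (hκ : 1 / √γ < κ)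
    (hz : z = (κ + 1) * (κ + γ⁻¹) / κ) :
    γ⁻¹ * mpStieltjes γ z = -γ⁻¹ / (γ⁻¹ + κ) := by
  have hγ0 : 0 < γ := by linarith
  set q := 1 / √γ with hq
  have hq0 : 0 < q := by positivity
  have hκ0 : 0 < κ := hq0.trans hκ
  have hq2 : γ⁻¹ = q ^ 2 := by rw [hq, div_pow, Real.sq_sqrt hγ0.le, one_pow, one_div]
  have hq1 : |-q| ≤ 1 := by
    rw [abs_neg, abs_of_pos hq0, hq, div_le_one (by positivity)]
    exact Real.one_le_sqrt.2 hγ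
  have hqκ : |q / κ| ≤ 1 := by
    rw [abs_of_pos (by positivity), div_le_one hκ0]
    exact hκ.le
  have ha : aGamma γ = 1 + q ^ 2 - 2 * q := by rw [aGamma]; ring
  have hb : bGamma γ = 1 + q ^ 2 + 2 * q := by rw [bGamma]; ring
  have hγq : γ = (q ^ 2)⁻¹ := by rw [← hq2, inv_inv]
  rw [hq2] at hz ⊢
  have hint : mpStieltjes γ z = ∫ θ in (0 : ℝ)..Real.pi,
      2 / (Real.pi * z) * (-(1 / κ) * sinSqKernel (q / κ) θ - sinSqKernel (-q) θ) := by
    rw [mpStieltjes_eq_setIntegral hγ0.le, ha, hb,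
      setIntegral_Icc_eq_integral_mul_sin (by positivity), hγq]
    refine intervalIntegral.integral_congr fun θ hθ => ?_
    rw [Set.uIcc_of_le Real.pi_pos.le] at hθ
    exact mp_integrand_eq_sinSqKernel hq0 hκ hz hθ
  rw [hint, intervalIntegral.integral_const_mul, intervalIntegral.integral_sub
      ((intervalIntegrable_sinSqKernel hqκ).const_mul _) (intervalIntegrable_sinSqKernel hq1),
    intervalIntegral.integral_const_mul, integral_sinSqKernel hqκ, integral_sinSqKernel hq1, hz]
  have hπ := Real.pi_ne_zero
  have : κ + q ^ 2 ≠ 0 := by positivity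
  field_simp
  ring

/-- With `q = γ^{-1/2}` this parametrizes the half-line to the right of the Marchenko–Pastur
edge. -/
theorem exists_eq_add_one_mul_add_sq_div (hq : 0 < q) (hz : (1 + q) ^ 2 < z) :
    ∃ κ, q < κ ∧ z = (κ + 1) * (κ + q ^ 2) / κ := by
  set B := z - 1 - q ^ 2 with hB
  have : 2 * q < B := by linarith
  have hdisc : 0 < B ^ 2 - 4 * q ^ 2 := by nlinarith
  set r := √(B ^ 2 - 4 * q ^ 2)
  have hr : r ^ 2 = B ^ 2 - 4 * q ^ 2 := Real.sq_sqrt hdisc.le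
  have hr0 : 0 < r := Real.sqrt_pos.2 hdisc
  have hκ0 : 0 < (B + r) / 2 := by linarith
  refine ⟨(B + r) / 2, by linarith, ?_⟩
  rw [eq_div_iff hκ0.ne', show z = B + 1 + q ^ 2 by rw [hB]; ring]
  linear_combination (-1 / 4) * hr

end MarchenkoPastur

/-! ### Selecting a root of the limiting quadratic equation -/

section RootSelection

variable {ι : Type*} {l : Filter ι} {S T : ι → ℝ} {r s η c κ κ' z z' : ℝ}

theorem eventually_le_add_of_tendsto_sub_mul_sub (hrs : r ≤ s) (hη : 0 < η)
    (h : Tendsto (fun i => (T i - r) * (T i - s)) l (𝓝 0)) : ∀ᶠ i in l, T i ≤ s + η := by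
  filter_upwards [h.eventually_lt_const (show 0 < η ^ 2 by positivity)] with i hi
  by_contra! hlt
  nlinarith

theorem tendsto_of_tendsto_sub_mul_sub (hη : 0 < η) (hT : ∀ᶠ i in l, T i ≤ s - η)
    (h : Tendsto (fun i => (T i - r) * (T i - s)) l (𝓝 0)) : Tendsto T l (𝓝 r) := by
  have hlim : Tendsto (fun i => η⁻¹ * |(T i - r) * (T i - s)|) l (𝓝 0) := by
    simpa only [abs_zero, mul_zero] using h.abs.const_mul η⁻¹
  rw [tendsto_iff_dist_tendsto_zero]
  refine squeeze_zero' (Eventually.of_forall fun i => dist_nonneg) ?_ hlim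
  filter_upwards [hT] with i hi
  have hgap : η ≤ |T i - s| := by rw [abs_sub_comm]; exact (le_sub_comm.1 hi).trans (le_abs_self _)
  rw [Real.dist_eq, le_inv_mul_iff₀ hη, abs_mul, mul_comm]
  exact mul_le_mul_of_nonneg_left hgap (abs_nonneg _)

theorem one_sub_mul_sub_sub_eq_roots (hc : 0 < c) (hκ : 0 < κ) (hz : z = (κ + 1) * (κ + c) / κ)
    (x : ℝ) :
    (1 - x) * (z * x - c) - x = -z * ((x - c / (c + κ)) * (x - κ / (1 + κ))) := by
  rw [hz]
  field_simp
  ring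

theorem tendsto_sub_mul_sub_of_tendsto_quadratic (hc : 0 < c) (hκ : 0 < κ)
    (hz : z = (κ + 1) * (κ + c) / κ)
    (h : Tendsto (fun i => (1 - T i) * (z * T i - c) - T i) l (𝓝 0)) :
    Tendsto (fun i => (T i - c / (c + κ)) * (T i - κ / (1 + κ))) l (𝓝 0) := by
  have hz0 : -z ≠ 0 := neg_ne_zero.2 (by rw [hz]; positivity)
  simp only [one_sub_mul_sub_sub_eq_roots hc hκ hz] at h
  simpa only [inv_mul_cancel_left₀ hz0, mul_zero] using h.const_mul (-z)⁻¹

/-- Both roots of the limiting quadratic equation are admissible for a single `z`. Since `T`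
decreases in `z` while the larger root increases, comparison with a second point `z' < z` rules out
the larger one. -/
theorem tendsto_smaller_root_of_le (hc : 0 < c) (hκ' : 0 < κ') (hcκ : c < κ' ^ 2)
    (hlt : κ' < κ) (hz : z = (κ + 1) * (κ + c) / κ) (hz' : z' = (κ' + 1) * (κ' + c) / κ')
    (hS : Tendsto (fun i => (1 - S i) * (z' * S i - c) - S i) l (𝓝 0))
    (hT : Tendsto (fun i => (1 - T i) * (z * T i - c) - T i) l (𝓝 0))
    (hTS : ∀ᶠ i in l, T i ≤ S i) : Tendsto T l (𝓝 (c / (c + κ))) := by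
  have hκ : 0 < κ := hκ'.trans hlt
  have hroots : c / (c + κ') ≤ κ' / (1 + κ') := by
    rw [div_le_div_iff₀ (by positivity) (by positivity)]
    nlinarith
  have hgap : κ' / (1 + κ') < κ / (1 + κ) := by
    rw [div_lt_div_iff₀ (by positivity) (by positivity)]
    nlinarith
  have hη : 0 < (κ / (1 + κ) - κ' / (1 + κ')) / 2 := by linarith
  have hS_le := eventually_le_add_of_tendsto_sub_mul_sub hroots hη
    (tendsto_sub_mul_sub_of_tendsto_quadratic hc hκ' hz' hS)
  refine tendsto_of_tendsto_sub_mul_sub hη ?_ (tendsto_sub_mul_sub_of_tendsto_quadratic hc hκ hz hT)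
  filter_upwards [hS_le, hTS] with i h₁ h₂
  linarith

theorem add_one_mul_add_div_lt (hκ' : 0 < κ') (hcκ : c < κ' ^ 2) (hlt : κ' < κ) :
    (κ' + 1) * (κ' + c) / κ' < (κ + 1) * (κ + c) / κ := by
  have hκ : 0 < κ := hκ'.trans hlt
  rw [div_lt_div_iff₀ hκ' hκ]
  have : c < κ * κ' := by nlinarith
  nlinarith [mul_pos (sub_pos.2 hlt) (sub_pos.2 this)]

end RootSelection

theorem tendsto_quadratic_of_tendsto_coeff {T c r : ℕ → ℝ} {z c₀ r₀ M : ℝ}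
    (hT : ∀ᶠ n in atTop, |T n| ≤ M) (hc : Tendsto c atTop (𝓝 c₀)) (hr : Tendsto r atTop (𝓝 r₀))
    (h : Tendsto (fun n => (1 - T n) * (z * T n - c n) - r n * T n) atTop (𝓝 0)) :
    Tendsto (fun n => (1 - T n) * (z * T n - c₀) - r₀ * T n) atTop (𝓝 0) := by
  have hc' : Tendsto (fun n => (c n - c₀) * (1 - T n)) atTop (𝓝 0) := by
    refine Tendsto.zero_mul_isBoundedUnder_le (by simpa using hc.sub_const c₀)
      (isBoundedUnder_of_eventually_le (a := 1 + M) ?_)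
    filter_upwards [hT] with n hn
    exact (norm_sub_le _ _).trans (by simpa using hn)
  have hr' : Tendsto (fun n => (r n - r₀) * T n) atTop (𝓝 0) :=
    Tendsto.zero_mul_isBoundedUnder_le (by simpa using hr.sub_const r₀)
      (isBoundedUnder_of_eventually_le hT)
  have hsum := (h.add hc').add hr'
  simp only [add_zero] at hsum
  exact hsum.congr fun n => by ring

/-! ### Ordered eigenvalues -/

section OrderedEigenvalues

variable {p : ℕ} {A : Matrix (Fin p) (Fin p) ℝ}

theorem exists_perm_ithEigDesc_eq (h : A.IsHermitian) :
    ∃ σ : Equiv.Perm (Fin p), Antitone (h.eigenvalues ∘ σ) ∧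
      ∀ α : Fin p, ithEigDesc A α = h.eigenvalues (σ α) := by
  let σ : Equiv.Perm (Fin p) := Fin.revPerm.trans (Tuple.sort h.eigenvalues)
  have hσ : Antitone (h.eigenvalues ∘ σ) :=
    (Tuple.monotone_sort h.eigenvalues).comp_antitone Fin.rev_anti
  have heigs : eigsDesc A = List.ofFn (h.eigenvalues ∘ σ) := by
    rw [eigsDesc, dif_pos h]
    exact ((List.perm_insertionSort _ _).trans (σ.ofFn_comp_perm _).symm).eq_of_sortedGE
      List.sortedGE_insertionSort (List.sortedGE_ofFn_iff.2 hσ)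
  exact ⟨σ, hσ, fun α => by simp [ithEigDesc, heigs]⟩

theorem antitone_ithEigDesc (h : A.IsHermitian) :
    Antitone (fun α : Fin p => ithEigDesc A α) := by
  obtain ⟨σ, hσ, heq⟩ := exists_perm_ithEigDesc_eq h
  simp only [heq]
  exact hσ

theorem prod_sub_ithEigDesc (h : A.IsHermitian) (t : ℝ) :
    ∏ α : Fin p, (t - ithEigDesc A α) = (t • (1 : Matrix (Fin p) (Fin p) ℝ) - A).det := by
  obtain ⟨σ, -, hσ⟩ := exists_perm_ithEigDesc_eq h
  simp only [hσ, Equiv.prod_comp σ fun i => t - h.eigenvalues i]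
  have := congrArg (Polynomial.eval t) h.charpoly_eq
  rw [eval_charpoly, Polynomial.eval_prod] at this
  simpa [smul_one_eq_diagonal, scalar_apply] using this.symm

theorem antitone_eq_of_prod_sub_eq {l l' : Fin p → ℝ} (hl : Antitone l) (hl' : Antitone l')
    (h : ∀ t : ℕ, ∏ α, ((t : ℝ) - l α) = ∏ α, ((t : ℝ) - l' α)) : l = l' := by
  have hpoly : ∏ α, (Polynomial.X - Polynomial.C (l α))
      = ∏ α, (Polynomial.X - Polynomial.C (l' α)) := by
    refine Polynomial.eq_of_infinite_eval_eq _ _ (Set.Infinite.mono ?_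
      (Set.infinite_range_of_injective (Nat.cast_injective (R := ℝ))))
    rintro _ ⟨t, rfl⟩
    simpa [Polynomial.eval_prod] using h t
  have hroots (f : Fin p → ℝ) :
      (∏ α, (Polynomial.X - Polynomial.C (f α))).roots = (List.ofFn f : Multiset ℝ) := by
    rw [← Fin.univ_val_map, ← Polynomial.roots_multiset_prod_X_sub_C (Finset.univ.val.map f),
      Multiset.map_map]
    rfl
  have hperm : (List.ofFn l : Multiset ℝ) = List.ofFn l' := by rw [← hroots, ← hroots, hpoly]
  exact List.ofFn_injective ((Multiset.coe_eq_coe.1 hperm).eq_of_sortedGE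
    (List.sortedGE_ofFn_iff.2 hl) (List.sortedGE_ofFn_iff.2 hl'))

theorem measurableSet_antitone : MeasurableSet {l : Fin p → ℝ | Antitone l} := by
  simp only [Antitone, Set.ofPred_forall]
  exact MeasurableSet.iInter fun a => MeasurableSet.iInter fun b => MeasurableSet.iInter fun _ =>
    measurableSet_le (measurable_pi_apply b) (measurable_pi_apply a)

/-- The ordered eigenvalues are recovered from the values of the characteristic polynomial by
inverting an injective continuous map, which is measurable by the Lusin–Souslin theorem. -/
theorem measurable_ithEigDesc {X : Type*} [MeasurableSpace X] {f : X → Matrix (Fin p) (Fin p) ℝ}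
    (hf : Measurable f) (hherm : ∀ x, (f x).IsHermitian) :
    Measurable fun x (α : Fin p) => ithEigDesc (f x) α := by
  let eval (l : Fin p → ℝ) (t : ℕ) : ℝ := ∏ α, ((t : ℝ) - l α)
  have hemb := ContinuousOn.measurableEmbedding measurableSet_antitone
    (show ContinuousOn eval {l | Antitone l} by fun_prop)
    (fun l hl l' hl' h => antitone_eq_of_prod_sub_eq hl hl' (congrFun h))
  let F (x : X) : {l : Fin p → ℝ | Antitone l} :=
    ⟨fun α => ithEigDesc (f x) α, antitone_ithEigDesc (hherm x)⟩
  suffices hF : Measurable F from measurable_subtype_coe.comp hF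
  rw [← hemb.measurable_comp_iff]
  refine measurable_pi_lambda _ fun t => ?_
  have hdet : Measurable fun x => ((t : ℝ) • (1 : Matrix (Fin p) (Fin p) ℝ) - f x).det :=
    (show Continuous fun M : Matrix (Fin p) (Fin p) ℝ => ((t : ℝ) • 1 - M).det by
      fun_prop).measurable.comp hf
  convert hdet using 1
  exact funext fun x => prod_sub_ithEigDesc (hherm x) t

end OrderedEigenvalues

section Trace

variable {n : Type*} [Fintype n] [DecidableEq n] {A : Matrix n n ℝ}

theorem trace_inv_smul_one_sub (h : A.IsHermitian) {x : ℝ} (hx : ∀ i, h.eigenvalues i ≠ x) :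
    ((x • 1 - A)⁻¹).trace = ∑ i, (x - h.eigenvalues i)⁻¹ := by
  let φ := Unitary.conjStarAlgAut ℝ (Matrix n n ℝ) h.eigenvectorUnitary
  have hφ (d : n → ℝ) : (φ (diagonal d)).trace = ∑ i, d i := by
    rw [Unitary.conjStarAlgAut_apply, trace_mul_comm, ← Matrix.mul_assoc,
      Unitary.coe_star_mul_self, Matrix.one_mul, trace_diagonal]
  have hA : x • 1 - A = φ (diagonal fun i => x - h.eigenvalues i) := by
    conv_lhs => rw [h.spectral_theorem]
    rw [← diagonal_sub, map_sub, ← smul_one_eq_diagonal, map_smul, map_one]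
    rfl
  have hinv : (x • 1 - A)⁻¹ = φ (diagonal fun i => (x - h.eigenvalues i)⁻¹) := by
    refine inv_eq_right_inv ?_
    rw [hA, ← map_mul, diagonal_mul_diagonal]
    simp only [mul_inv_cancel₀ (sub_ne_zero.2 (hx _).symm), diagonal_one, map_one]
  rw [hinv, hφ]

end Trace

section Gram

variable {m : Type*} [Fintype m] {p : ℕ} {W : Matrix m (Fin p) ℝ} {B x : ℝ}

theorem isHermitian_gram (W : Matrix m (Fin p) ℝ) : (Wᵀ * W).IsHermitian := by
  simpa using isHermitian_conjTranspose_mul_self W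

theorem measurable_ithEigDesc_gram :
    Measurable fun (W : Matrix m (Fin p) ℝ) (α : Fin p) => ithEigDesc (Wᵀ * W) α :=
  measurable_ithEigDesc (Continuous.measurable (by fun_prop)) isHermitian_gram

theorem eigenvalues_gram_mem_Icc (hW : SqNormBound W B) (i : Fin p) :
    (isHermitian_gram W).eigenvalues i ∈ Set.Icc 0 B := by
  have hpos : (Wᵀ * W).PosSemidef := by simpa using posSemidef_conjTranspose_mul_self W
  have hquad : QuadFormBound (Wᵀ * W) B := fun v => by
    rw [← mulVec_mulVec, dotProduct_mulVec, vecMul_transpose,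
      abs_of_nonneg (dotProduct_self_nonneg _)]
    exact hW v
  exact ⟨hpos.eigenvalues_nonneg i,
    (le_abs_self _).trans (abs_eigenvalues_le_of_quadFormBound _ hquad i)⟩

theorem ithEigDesc_gram_mem_Icc (hW : SqNormBound W B) (α : Fin p) :
    ithEigDesc (Wᵀ * W) α ∈ Set.Icc 0 B := by
  obtain ⟨σ, -, hσ⟩ := exists_perm_ithEigDesc_eq (isHermitian_gram W)
  rw [hσ]
  exact eigenvalues_gram_mem_Icc hW _

theorem trace_gramResolvent_eq_sum (hxB : B < x) (hW : SqNormBound W B) :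
    (gramResolvent x W).trace = ∑ α : Fin p, (x - ithEigDesc (Wᵀ * W) α)⁻¹ := by
  have h := isHermitian_gram W
  obtain ⟨σ, -, hσ⟩ := exists_perm_ithEigDesc_eq h
  simp only [hσ, Equiv.sum_comp σ fun i => (x - h.eigenvalues i)⁻¹]
  exact trace_inv_smul_one_sub h fun i => ((eigenvalues_gram_mem_Icc hW i).2.trans_lt hxB).ne

end Gram

theorem diagonal_sub_smul_one_inv {m : Type*} [Fintype m] [DecidableEq m] {l : m → ℝ} {z : ℝ}
    (h : ∀ α, l α ≠ z) :
    (diagonal l - z • (1 : Matrix m m ℝ))⁻¹ = diagonal fun α => (l α - z)⁻¹ := by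
  refine inv_eq_right_inv ?_
  rw [smul_one_eq_diagonal, diagonal_sub, diagonal_mul_diagonal, ← diagonal_one]
  exact congrArg diagonal (funext fun α => mul_inv_cancel₀ (sub_ne_zero.2 (h α)))

/-! ### Weighted products of Gaussian coordinates -/

theorem sum_sq_comp_le_dotProduct_self {ι κ : Type*} [Fintype ι] [Fintype κ] {u : κ → ι}
    (hu : u.Injective) (x : ι → ℝ) : ∑ α, x (u α) ^ 2 ≤ x ⬝ᵥ x := by
  calc ∑ α, x (u α) ^ 2 = ∑ i ∈ Finset.univ.map ⟨u, hu⟩, x i ^ 2 := by simp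
    _ ≤ ∑ i, x i ^ 2 := Finset.sum_le_sum_of_subset_of_nonneg (Finset.subset_univ _)
        fun i _ _ => sq_nonneg _
    _ = x ⬝ᵥ x := by simp [dotProduct, sq]

section WeightedProducts

variable {ι κ : Type*} [Fintype κ] [DecidableEq ι] {u v : κ → ι} {d : κ → ℝ}

/-- The weighted sum of the products `g (u α) * g (v α)`, centred at its mean under
`gaussianArray ι`. -/
def centeredProductSum (u v : κ → ι) (d : κ → ℝ) (g : ι → ℝ) : ℝ :=
  ∑ α, d α * (g (u α) * g (v α) - if u α = v α then 1 else 0)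

theorem sum_mul_eq_centeredProductSum_add {r : Prop} [Decidable r] (h : ∀ α, u α = v α ↔ r)
    (d : κ → ℝ) (g : ι → ℝ) :
    ∑ α, d α * (g (u α) * g (v α))
      = centeredProductSum u v d g + (∑ α, d α) * if r then 1 else 0 := by
  simp only [centeredProductSum, h, mul_sub, Finset.sum_sub_distrib, Finset.sum_mul, sub_add_cancel]

/-- The symmetric matrix of the quadratic form `∑ α, d α * (x (u α) * x (v α))`. -/
def productSumMatrix (u v : κ → ι) (d : κ → ℝ) : Matrix ι ι ℝ :=
  ∑ α, (single (u α) (v α) (d α / 2) + single (v α) (u α) (d α / 2))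

theorem isHermitian_productSumMatrix : (productSumMatrix u v d).IsHermitian := by
  rw [IsHermitian, conjTranspose_eq_transpose_of_trivial, productSumMatrix, transpose_sum]
  refine Finset.sum_congr rfl fun α _ => ?_
  rw [transpose_add, transpose_single, transpose_single, add_comm]

variable [Fintype ι]

theorem dotProduct_productSumMatrix_mulVec (x : ι → ℝ) :
    x ⬝ᵥ (productSumMatrix u v d *ᵥ x) = ∑ α, d α * (x (u α) * x (v α)) := by
  rw [productSumMatrix, sum_mulVec, dotProduct_sum]
  refine Finset.sum_congr rfl fun α _ => ?_
  rw [add_mulVec, dotProduct_add, single_mulVec, single_mulVec]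
  simp only [dotProduct, Function.update_apply, Pi.zero_apply, mul_ite, mul_zero,
    Finset.sum_ite_eq', Finset.mem_univ, if_true]
  ring

theorem trace_productSumMatrix :
    (productSumMatrix u v d).trace = ∑ α, d α * if u α = v α then 1 else 0 := by
  rw [productSumMatrix, trace_sum]
  refine Finset.sum_congr rfl fun α _ => ?_
  rw [trace_add]
  split_ifs with huv
  · rw [huv, trace_single_eq_same]; ring
  · rw [trace_single_eq_of_ne _ _ _ huv, trace_single_eq_of_ne _ _ _ (Ne.symm huv)]; ring

theorem centeredProductSum_eq (g : ι → ℝ) :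
    centeredProductSum u v d g
      = g ⬝ᵥ (productSumMatrix u v d *ᵥ g) - (productSumMatrix u v d).trace := by
  simp only [centeredProductSum, dotProduct_productSumMatrix_mulVec, trace_productSumMatrix,
    mul_sub, Finset.sum_sub_distrib]

theorem quadFormBound_productSumMatrix {D : ℝ} (hD : 0 ≤ D) (hu : u.Injective)
    (hv : v.Injective) (hd : ∀ α, |d α| ≤ D) : QuadFormBound (productSumMatrix u v d) D := by
  intro x
  rw [dotProduct_productSumMatrix_mulVec]
  calc |∑ α, d α * (x (u α) * x (v α))| ≤ ∑ α, |d α * (x (u α) * x (v α))| :=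
        Finset.abs_sum_le_sum_abs _ _
    _ ≤ ∑ α, D * ((x (u α) ^ 2 + x (v α) ^ 2) / 2) := by
        refine Finset.sum_le_sum fun α _ => ?_
        rw [abs_mul]
        refine mul_le_mul (hd α) ?_ (abs_nonneg _) hD
        rw [abs_le]
        constructor <;> nlinarith [sq_nonneg (x (u α) - x (v α)), sq_nonneg (x (u α) + x (v α))]
    _ = D * ((∑ α, x (u α) ^ 2 + ∑ α, x (v α) ^ 2) / 2) := by
        rw [← Finset.mul_sum, ← Finset.sum_div, Finset.sum_add_distrib]
    _ ≤ D * (x ⬝ᵥ x) := by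
        have := sum_sq_comp_le_dotProduct_self hu x
        have := sum_sq_comp_le_dotProduct_self hv x
        gcongr
        linarith

variable {X : Type*} [MeasurableSpace X] {D C ε N : ℝ}

theorem gaussianArray_centeredProductSum_le_exp (hD : 0 < D) (hC : 0 < C) (hε : 0 < ε)
    (hcard : Fintype.card ι ≤ C * N) (hu : u.Injective) (hv : v.Injective)
    (hd : ∀ α, |d α| ≤ D) :
    gaussianArray ι {g | ε * N ≤ |centeredProductSum u v d g|}
      ≤ ENNReal.ofReal (2 * Real.exp (-quadFormRate D C ε * N)) := by
  simpa only [centeredProductSum_eq] using gaussianArray_quadForm_le_exp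
    isHermitian_productSumMatrix hD hC hε hcard (quadFormBound_productSumMatrix hD.le hu hv hd)

/-- The weights may be functions of a variable `x ∈ X` independent of the array: condition on
`x`. -/
theorem prod_gaussianArray_centeredProductSum_le_exp {μ : Measure X} [IsProbabilityMeasure μ]
    {G : Set X} {w : X → κ → ℝ} (hD : 0 < D) (hC : 0 < C) (hε : 0 < ε)
    (hcard : Fintype.card ι ≤ C * N) (hu : u.Injective) (hv : v.Injective)
    (hG : MeasurableSet G) (hw : Measurable w) (hwD : ∀ x ∈ G, ∀ α, |w x α| ≤ D) :
    (μ.prod (gaussianArray ι)) {q | q.1 ∈ G ∧ ε * N ≤ |centeredProductSum u v (w q.1) q.2|}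
      ≤ ENNReal.ofReal (2 * Real.exp (-quadFormRate D C ε * N)) := by
  have hmeas : Measurable fun q : X × (ι → ℝ) => centeredProductSum u v (w q.1) q.2 := by
    unfold centeredProductSum
    fun_prop
  rw [← zero_add (ENNReal.ofReal _), ← measure_empty (μ := μ)]
  refine measure_prod_le_add_of_section_le
    ((measurable_fst hG).inter (measurableSet_le measurable_const hmeas.abs)) .empty fun x _ => ?_
  by_cases hx : x ∈ G
  · exact (measure_mono fun g hg => hg.2).trans
      (gaussianArray_centeredProductSum_le_exp hD hC hε hcard hu hv (hwD x hx))
  · exact (measure_mono_null (fun g hg => hx hg.1) measure_empty).trans_le zero_le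

end WeightedProducts

/-! ### Almost sure convergence from exponential tails -/

section BorelCantelli

variable {Ω : Type*} [MeasurableSpace Ω] {P : Measure Ω}

theorem ae_eventually_notMem_of_measure_le_exp {S : ℕ → Set Ω} {A c : ℝ} (hc : 0 < c)
    (h : ∀ᶠ n : ℕ in atTop, P (S n) ≤ ENNReal.ofReal (A * n * Real.exp (-c * n))) :
    ∀ᵐ ω ∂P, ∀ᶠ n in atTop, ω ∉ S n := by
  obtain ⟨N, hN⟩ := eventually_atTop.1 h
  have hs : Summable fun n : ℕ => A * n * Real.exp (-c * n) := by
    simpa only [pow_one, mul_assoc] using (Real.summable_pow_mul_exp_neg_nat_mul 1 hc).mul_left A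
  have hae := ae_eventually_notMem (μ := P) (s := fun n => if n < N then ∅ else S n) <| by
    refine ne_top_of_le_ne_top hs.tsum_ofReal_ne_top (ENNReal.tsum_le_tsum fun n => ?_)
    split_ifs with hn
    · simp
    · exact hN n (not_lt.1 hn)
  filter_upwards [hae] with ω hω
  filter_upwards [hω, eventually_ge_atTop N] with n hn hnN
  simpa [not_lt.2 hnN] using hn

theorem ae_tendsto_zero_of_measure_le_exp {G : ℕ → Set Ω} {X : ℕ → Ω → ℝ}
    (h : ∀ ε > 0, ∃ A c : ℝ, 0 < c ∧ ∀ᶠ n : ℕ in atTop,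
      P {ω | ω ∈ G n ∧ ε ≤ |X n ω|} ≤ ENNReal.ofReal (A * n * Real.exp (-c * n))) :
    ∀ᵐ ω ∂P, (∀ᶠ n in atTop, ω ∈ G n) → Tendsto (fun n => X n ω) atTop (𝓝 0) := by
  have hsmall (j : ℕ) : ∀ᵐ ω ∂P, ∀ᶠ n in atTop, ω ∉ {ω | ω ∈ G n ∧ 1 / (j + 1 : ℝ) ≤ |X n ω|} := by
    obtain ⟨A, c, hc, hA⟩ := h (1 / (j + 1 : ℝ)) (by positivity)
    exact ae_eventually_notMem_of_measure_le_exp hc hA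
  filter_upwards [ae_all_iff.2 hsmall] with ω hω hG
  refine Metric.tendsto_nhds.2 fun ε hε => ?_
  obtain ⟨j, hj⟩ := exists_nat_one_div_lt hε
  filter_upwards [hω j, hG] with n hn hGn
  rw [Real.dist_0_eq_abs]
  exact (lt_of_not_ge fun hX => hn ⟨hGn, hX⟩).trans hj

end BorelCantelli

/-! ### Laws of the noise blocks -/

section Laws

variable {Ω : Type*} [MeasurableSpace Ω] {P : Measure Ω}

theorem measure_mem_le_of_hasLaw {X : Type*} [MeasurableSpace X] {μ : Measure X} {f : Ω → X}
    (hf : HasLaw f μ P) (S : Set X) : P {ω | f ω ∈ S} ≤ μ S :=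
  hf.map_eq ▸ Measure.le_map_apply hf.aemeasurable S

theorem hasLaw_prodMk_sumElim {X α β : Type*} [MeasurableSpace X] [Fintype α] [Fintype β]
    [IsProbabilityMeasure P] {ν : Measure X} [IsProbabilityMeasure ν] {μ : Measure ℝ}
    [IsProbabilityMeasure μ] {w : Ω → X} {a : Ω → α → ℝ} {b : Ω → β → ℝ}
    (hw : HasLaw w ν P) (ha : HasLaw a (Measure.pi fun _ => μ) P)
    (hb : HasLaw b (Measure.pi fun _ => μ) P)
    (habw : IndepFun a (fun ω => (b ω, w ω)) P) (hbw : IndepFun b w P) :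
    HasLaw (fun ω => (w ω, Sum.elim (a ω) (b ω)))
      (ν.prod (Measure.pi fun _ : α ⊕ β => μ)) P := by
  have hjoint := habw.hasLaw_prod ha (hbw.hasLaw_prod hb hw)
  have hassoc := (measurePreserving_prodAssoc (Measure.pi fun _ : α => μ)
    (Measure.pi fun _ : β => μ) ν).symm
  have hsum := measurePreserving_sumPiEquivProdPi_symm fun _ : α ⊕ β => μ
  have hlaw := (((MeasurePreserving.id ν).prod hsum).comp
    (Measure.measurePreserving_swap.comp hassoc)).comp_hasLaw hjoint
  convert hlaw using 2 with ω
  refine Prod.ext rfl (funext fun i => ?_)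
  cases i <;> rfl

theorem hasLaw_of_iidGaussian {ι : Type*} [Fintype ι] {X : Ω → ι → ℝ} (h : IIDGaussian P X 1) :
    HasLaw X (gaussianArray ι) P :=
  ⟨.of_map_ne_zero (h ▸ IsProbabilityMeasure.ne_zero (gaussianArray ι)), h⟩

theorem hasLaw_gaussianMatrix_of_iidGaussian {m n : Type*} [Fintype m] [Fintype n]
    {W : Ω → Matrix m n ℝ} (h : IIDGaussian P (fun ω => matEntries (W ω)) 1) :
    HasLaw W (gaussianMatrix m n) P :=
  measurePreserving_toMat.comp_hasLaw (hasLaw_of_iidGaussian h)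

theorem measurable_matEntries {m n : Type*} :
    Measurable (matEntries : Matrix m n ℝ → m × n → ℝ) :=
  measurable_pi_lambda _ fun q => measurable_matrix_entry q.1 q.2

end Laws

/-! ### The weighted noise products -/

theorem tendsto_natCast_sub_div {a : ℕ → ℕ} {c : ℝ}
    (ha : Tendsto (fun n => (a n : ℝ) / n) atTop (𝓝 c)) (k : ℕ) :
    Tendsto (fun n => ((a n - k : ℕ) : ℝ) / n) atTop (𝓝 c) := by
  have hlower : Tendsto (fun n : ℕ => (a n : ℝ) / n - k / n) atTop (𝓝 c) := by
    simpa using ha.sub (tendsto_const_div_atTop_nhds_zero_nat (k : ℝ))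
  refine tendsto_of_tendsto_of_tendsto_of_le_of_le hlower ha (fun n => ?_) fun n => ?_
  · have : (a n : ℝ) ≤ (a n - k : ℕ) + k := by exact_mod_cast le_tsub_add
    rw [← sub_div]
    gcongr
    linarith
  · dsimp only
    gcongr
    exact Nat.sub_le _ _

theorem exists_pos_sqrt_add_sqrt_sq_lt {c b : ℝ} (hb : (1 + √c) ^ 2 < b) :
    ∃ ε > 0, (√(1 + ε) + √(c + ε + ε)) ^ 2 < b := by
  have hcont : ContinuousAt (fun ε : ℝ => (√(1 + ε) + √(c + ε + ε)) ^ 2) 0 := by fun_prop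
  have hlt : (fun ε : ℝ => (√(1 + ε) + √(c + ε + ε)) ^ 2) 0 < b := by simpa using hb
  obtain ⟨ε, hε, hpos⟩ := (((hcont.eventually_lt_const hlt).filter_mono nhdsWithin_le_nhds).and
    (self_mem_nhdsWithin (s := Set.Ioi (0 : ℝ)))).exists
  exact ⟨ε, hpos, hε⟩

theorem abs_sub_inv_le {x b z : ℝ} (hx : x ≤ b) (hbz : b < z) : |(x - z)⁻¹| ≤ (z - b)⁻¹ := by
  have hle : z - b ≤ z - x := sub_le_sub_left hx z
  rw [abs_inv, abs_sub_comm, abs_of_pos ((sub_pos.2 hbz).trans_le hle)]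
  exact inv_anti₀ (sub_pos.2 hbz) hle

/-- Indices of the entries of a `k × q` matrix together with those of a `q × k` matrix. -/
abbrev NoiseIndex (k q : ℕ) : Type := Fin k × Fin q ⊕ Fin q × Fin k

namespace NoiseBlocks

variable {k : ℕ} {γ : ℝ} {p : ℕ → ℕ} {Ω : Type*} [MeasurableSpace Ω] {P : Measure Ω}
  (B : NoiseBlocks k γ p Ω P) {n : ℕ} {ω : Ω} {b z : ℝ}

section Dimensions

include B

theorem tendsto_cols_div (hγ : 0 < γ) :
    Tendsto (fun n => ((p n - k : ℕ) : ℝ) / n) atTop (𝓝 γ⁻¹) :=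
  tendsto_natCast_sub_div ((B.aspect.inv₀ hγ.ne').congr fun _ => inv_div _ _) k

theorem eventually_cols_le (hγ : 0 < γ) {ρ : ℝ} (hρ : γ⁻¹ < ρ) :
    ∀ᶠ n : ℕ in atTop, ((p n - k : ℕ) : ℝ) ≤ ρ * n := by
  filter_upwards [(B.tendsto_cols_div hγ).eventually_lt_const hρ, eventually_gt_atTop 0]
    with n hn hn0
  exact ((div_lt_iff₀ (Nat.cast_pos.2 hn0)).1 hn).le

end Dimensions

theorem hasLaw_W (n : ℕ) :
    HasLaw (B.W n) (gaussianMatrix (Fin (n - k)) (Fin (p n - k))) P :=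
  hasLaw_gaussianMatrix_of_iidGaussian (B.Wgauss n)

/-- The entries of `E_{n,12}` and `E_{n,21}` as one Gaussian array: in this array the entries of all
three weighted products are quadratic forms. -/
def noise (n : ℕ) (ω : Ω) : NoiseIndex k (p n - k) → ℝ :=
  Sum.elim (matEntries (B.E12 n ω)) (matEntries (B.E21 n ω))

theorem hasLaw_W_noise [IsProbabilityMeasure P] (n : ℕ) :
    HasLaw (fun ω => (B.W n ω, B.noise n ω))
      ((gaussianMatrix (Fin (n - k)) (Fin (p n - k))).prod (gaussianArray _)) P :=
  hasLaw_prodMk_sumElim (B.hasLaw_W n) (hasLaw_of_iidGaussian (B.E12gauss n))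
    (hasLaw_of_iidGaussian (B.E21gauss n))
    ((B.indep1 n).comp measurable_matEntries (measurable_matEntries.prodMap measurable_id))
    ((B.indep2 n).comp measurable_matEntries measurable_id)

theorem ae_eventually_sqNormBound (hγ : 0 < γ) (hb : bGamma γ < b) :
    ∀ᵐ ω ∂P, ∀ᶠ n : ℕ in atTop, SqNormBound (B.W n ω) (n * b) := by
  have hb' : (1 + √γ⁻¹) ^ 2 < b := by simpa [bGamma, Real.sqrt_inv] using hb
  obtain ⟨ε, hε, hlt⟩ := exists_pos_sqrt_add_sqrt_sq_lt hb'
  have hρ : 0 < γ⁻¹ + ε := by positivity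
  have hrate : 0 < quadFormRate 1 (max 1 (γ⁻¹ + ε)) ε := quadFormRate_pos one_pos (by positivity) hε
  have hfail : ∀ᶠ n : ℕ in atTop, P {ω | ¬SqNormBound (B.W n ω) (n * b)} ≤
      ENNReal.ofReal (4 * n * Real.exp (-quadFormRate 1 (max 1 (γ⁻¹ + ε)) ε * n)) := by
    filter_upwards [B.eventually_cols_le hγ (lt_add_of_pos_right γ⁻¹ hε), eventually_gt_atTop 0]
      with n hcols hn
    calc P {ω | ¬SqNormBound (B.W n ω) (n * b)}
        ≤ gaussianMatrix _ _ {W | ¬SqNormBound W (n * b)} :=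
          measure_mem_le_of_hasLaw (B.hasLaw_W n) {W | ¬SqNormBound W (n * b)}
      _ ≤ gaussianMatrix _ _
            {W | ¬SqNormBound W (n * (√(1 + ε) + √(γ⁻¹ + ε + ε)) ^ 2)} :=
          measure_mono fun W hW h => hW (h.mono (by gcongr))
      _ ≤ _ := gaussianMatrix_not_sqNormBound_le hρ hε (Nat.cast_pos.2 hn)
          (Nat.cast_le.2 (Nat.sub_le _ _)) hcols
  filter_upwards [ae_eventually_notMem_of_measure_le_exp hrate hfail] with ω hω
  exact hω.mono fun n => not_not.1

theorem lam_eq_ithEigDesc_div (hn : n ≠ 0) (ω : Ω) (α : Fin (p n - k)) :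
    B.lam n ω α = ithEigDesc ((B.W n ω)ᵀ * B.W n ω) α / n := by
  rw [← B.lamEig, mul_div_cancel_left₀ _ (Nat.cast_ne_zero.2 hn)]

variable {B}

theorem lam_mem_Icc (hn : n ≠ 0) (hW : SqNormBound (B.W n ω) (n * b)) (α : Fin (p n - k)) :
    B.lam n ω α ∈ Set.Icc 0 b := by
  have hn' : (0 : ℝ) < n := by positivity
  obtain ⟨h0, hle⟩ := ithEigDesc_gram_mem_Icc hW α
  rw [← B.lamEig] at h0 hle
  exact ⟨nonneg_of_mul_nonneg_right h0 hn', le_of_mul_le_mul_left hle hn'⟩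

variable (B)

theorem ae_eventually_lam_ne (hγ : 0 < γ) (hz : bGamma γ < z) :
    ∀ᵐ ω ∂P, ∀ᶠ n : ℕ in atTop, ∀ α, B.lam n ω α ≠ z := by
  obtain ⟨b, hb, hbz⟩ := exists_between hz
  filter_upwards [B.ae_eventually_sqNormBound hγ hb] with ω hW
  filter_upwards [hW, eventually_ne_atTop 0] with n hWn hn α
  exact ((lam_mem_Icc hn hWn α).2.trans_lt hbz).ne

/-- The normalized trace `(1/n) tr (z I - Λ_n)⁻¹`, the trace of the resolvent of `WᵀW` at `n z`. -/
def resolventTrace (n : ℕ) (ω : Ω) (z : ℝ) : ℝ := 1 / (n : ℝ) * ∑ α, (z - B.lam n ω α)⁻¹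

variable {B}

theorem trace_gramResolvent_eq_resolventTrace (hn : n ≠ 0) (hbz : b < z)
    (hW : SqNormBound (B.W n ω) (n * b)) :
    (gramResolvent (n * z) (B.W n ω)).trace = B.resolventTrace n ω z := by
  have hlt : (n : ℝ) * b < n * z := mul_lt_mul_of_pos_left hbz (by positivity)
  rw [trace_gramResolvent_eq_sum hlt hW, resolventTrace, Finset.mul_sum]
  refine Finset.sum_congr rfl fun α _ => ?_
  rw [← B.lamEig, ← mul_sub, mul_inv, one_div]

theorem abs_resolventTrace_le (hn : n ≠ 0) (hbz : b < z) (hW : SqNormBound (B.W n ω) (n * b)) :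
    |B.resolventTrace n ω z| ≤ ((p n - k : ℕ) : ℝ) / n * (z - b)⁻¹ := by
  have hterm : ∀ α, |(z - B.lam n ω α)⁻¹| ≤ (z - b)⁻¹ := fun α => by
    rw [abs_inv, abs_sub_comm, ← abs_inv]
    exact abs_sub_inv_le (lam_mem_Icc hn hW α).2 hbz
  calc |B.resolventTrace n ω z|
      = 1 / (n : ℝ) * |∑ α, (z - B.lam n ω α)⁻¹| := by
        rw [resolventTrace, abs_mul, abs_of_nonneg (by positivity)]
    _ ≤ 1 / (n : ℝ) * ∑ _α : Fin (p n - k), (z - b)⁻¹ := by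
        gcongr
        exact (Finset.abs_sum_le_sum_abs _ _).trans (Finset.sum_le_sum fun α _ => hterm α)
    _ = _ := by simp; ring

theorem resolventTrace_anti {z' : ℝ} (hn : n ≠ 0) (hbz' : b < z') (hz : z' ≤ z)
    (hW : SqNormBound (B.W n ω) (n * b)) :
    B.resolventTrace n ω z ≤ B.resolventTrace n ω z' := by
  unfold resolventTrace
  gcongr
  exact sub_pos.2 ((lam_mem_Icc hn hW α).2.trans_lt hbz')

theorem abs_resolventTrace_equation_le (hn : n ≠ 0) (hb : 0 ≤ b) (hbz : b < z)
    (hW : SqNormBound (B.W n ω) (n * b)) :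
    |(1 - B.resolventTrace n ω z) * (z * B.resolventTrace n ω z - ((p n - k : ℕ) : ℝ) / n) -
        ((n - k : ℕ) : ℝ) / n * B.resolventTrace n ω z| ≤
      ((n - k : ℕ) : ℝ) / n *
        ((‖looError (n * z) (B.W n ω)‖ + b / (z - b) ^ 2 / n) * (1 + b / (z - b))) := by
  have hn' : (0 : ℝ) < n := by positivity
  have hz : z - b ≠ 0 := (sub_pos.2 hbz).ne'
  have hlt : (n : ℝ) * b < n * z := mul_lt_mul_of_pos_left hbz hn'
  have h := abs_trace_gramResolvent_equation_le (by positivity) hlt hW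
  rw [trace_gramResolvent_eq_resolventTrace hn hbz hW, Fintype.card_fin, Fintype.card_fin,
    ← mul_sub] at h
  refine le_of_mul_le_mul_left ?_ hn'
  rw [← abs_of_pos hn', ← abs_mul, abs_of_pos hn']
  refine (congrArg abs ?_).trans_le (h.trans_eq ?_) <;> field_simp

variable (B)

theorem ae_tendsto_looError (hγ : 0 < γ) (hb : bGamma γ < b) (hbz : b < z) :
    ∀ᵐ ω ∂P, Tendsto (fun n : ℕ => ‖looError (n * z) (B.W n ω)‖) atTop (𝓝 0) := by
  have hδ : 0 < z - b := sub_pos.2 hbz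
  have hC : 0 < γ⁻¹ + 1 := by positivity
  have hconc : ∀ ε > 0, ∃ A c : ℝ, 0 < c ∧ ∀ᶠ n : ℕ in atTop,
      P {ω | ω ∈ {ω | SqNormBound (B.W n ω) (n * b)} ∧ ε ≤ |‖looError (n * z) (B.W n ω)‖|} ≤
        ENNReal.ofReal (A * n * Real.exp (-c * n)) := by
    refine fun ε hε => ⟨2, _, quadFormRate_pos (inv_pos.2 hδ) hC hε, ?_⟩
    filter_upwards [B.eventually_cols_le hγ (lt_add_one γ⁻¹), eventually_gt_atTop 0] with n hcols hn
    simp only [abs_norm]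
    calc P {ω | SqNormBound (B.W n ω) (n * b) ∧ ε ≤ ‖looError (n * z) (B.W n ω)‖}
        ≤ gaussianMatrix _ _ {W | SqNormBound W (n * b) ∧ ε ≤ ‖looError (n * z) W‖} :=
          measure_mem_le_of_hasLaw (B.hasLaw_W n)
            {W | SqNormBound W (n * b) ∧ ε ≤ ‖looError (n * z) W‖}
      _ ≤ (n - k : ℕ) *
            ENNReal.ofReal (2 * Real.exp (-quadFormRate (z - b)⁻¹ (γ⁻¹ + 1) ε * n)) := by
          have hx : n * b + (z - b) * n ≤ n * z := by linarith
          have hcard : (Fintype.card (Fin (p n - k)) : ℝ) ≤ (γ⁻¹ + 1) * n := by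
            simpa only [Fintype.card_fin] using hcols
          simpa only [Fintype.card_fin] using
            gaussianMatrix_looError_le (m := Fin (n - k)) (Nat.cast_pos.2 hn) hδ hx hC hε hcard
      _ ≤ n * ENNReal.ofReal (2 * Real.exp (-quadFormRate (z - b)⁻¹ (γ⁻¹ + 1) ε * n)) := by
          gcongr
          exact Nat.sub_le _ _
      _ = _ := by
          rw [← ENNReal.ofReal_natCast, ← ENNReal.ofReal_mul (by positivity)]
          ring_nf
  filter_upwards [ae_tendsto_zero_of_measure_le_exp hconc, B.ae_eventually_sqNormBound hγ hb]
    with ω hω hW using hω hW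

theorem ae_tendsto_resolventTrace_equation (hγ : 0 < γ) (hz : bGamma γ < z) :
    ∀ᵐ ω ∂P, Tendsto (fun n => (1 - B.resolventTrace n ω z) * (z * B.resolventTrace n ω z - γ⁻¹) -
      B.resolventTrace n ω z) atTop (𝓝 0) := by
  obtain ⟨b, hb, hbz⟩ := exists_between hz
  have hb0 : 0 ≤ b := (sq_nonneg _).trans hb.le
  have hrows : Tendsto (fun n : ℕ => ((n - k : ℕ) : ℝ) / n) atTop (𝓝 1) :=
    tendsto_natCast_sub_div (a := id) (tendsto_const_nhds.congr' ((eventually_ne_atTop 0).mono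
      fun n hn => (div_self (Nat.cast_ne_zero.2 hn)).symm)) k
  filter_upwards [B.ae_eventually_sqNormBound hγ hb, B.ae_tendsto_looError hγ hb hbz]
    with ω hW hloo
  have hT : ∀ᶠ n in atTop, |B.resolventTrace n ω z| ≤ (γ⁻¹ + 1) * (z - b)⁻¹ := by
    filter_upwards [hW, eventually_ne_atTop 0,
      (B.tendsto_cols_div hγ).eventually_le_const (lt_add_one γ⁻¹)] with n hWn hn hcols
    exact (abs_resolventTrace_le hn hbz hWn).trans
      (mul_le_mul_of_nonneg_right hcols (inv_nonneg.2 (sub_nonneg.2 hbz.le)))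
  have hbound : Tendsto (fun n : ℕ => ((n - k : ℕ) : ℝ) / n *
      ((‖looError (n * z) (B.W n ω)‖ + b / (z - b) ^ 2 / n) * (1 + b / (z - b)))) atTop (𝓝 0) := by
    simpa using hrows.mul ((hloo.add (tendsto_const_div_atTop_nhds_zero_nat _)).mul_const _)
  simpa only [one_mul] using
    tendsto_quadratic_of_tendsto_coeff hT (B.tendsto_cols_div hγ) hrows
      (squeeze_zero_norm' ((hW.and (eventually_ne_atTop 0)).mono fun n hn =>
        abs_resolventTrace_equation_le hn.2 hb0 hbz hn.1) hbound)

theorem ae_tendsto_resolventTrace (hγ : 1 ≤ γ) (hz : bGamma γ < z) :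
    ∀ᵐ ω ∂P, Tendsto (fun n => B.resolventTrace n ω z) atTop (𝓝 (-(γ⁻¹ * mpStieltjes γ z))) := by
  have hγ0 : 0 < γ := one_pos.trans_le hγ
  have hq : 0 < 1 / √γ := by positivity
  have hqsq : (1 / √γ) ^ 2 = γ⁻¹ := by rw [div_pow, Real.sq_sqrt hγ0.le, one_pow, one_div]
  obtain ⟨z', hz', hz'z⟩ := exists_between hz
  obtain ⟨b, hb, hbz'⟩ := exists_between hz'
  obtain ⟨κ, hκ, hzκ⟩ := exists_eq_add_one_mul_add_sq_div hq hz
  obtain ⟨κ', hκ', hzκ'⟩ := exists_eq_add_one_mul_add_sq_div hq hz'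
  have hsq : ∀ {x : ℝ}, 1 / √γ < x → γ⁻¹ < x ^ 2 := fun hx => hqsq ▸ by gcongr
  rw [hqsq] at hzκ hzκ'
  have hκκ' : κ' < κ := by
    refine lt_of_not_ge fun hle => ?_
    rcases hle.eq_or_lt with heq | hlt
    · exact hz'z.ne (by rw [hzκ, hzκ', heq])
    · have := add_one_mul_add_div_lt (hq.trans hκ) (hsq hκ) hlt
      exact (hzκ ▸ hzκ' ▸ this).asymm hz'z
  have hlimit : -(γ⁻¹ * mpStieltjes γ z) = γ⁻¹ / (γ⁻¹ + κ) := by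
    rw [inv_mul_mpStieltjes_eq hγ hκ hzκ, neg_div, neg_neg]
  filter_upwards [B.ae_eventually_sqNormBound hγ0 hb,
    B.ae_tendsto_resolventTrace_equation hγ0 hz, B.ae_tendsto_resolventTrace_equation hγ0 hz']
    with ω hW hT hS
  rw [hlimit]
  refine tendsto_smaller_root_of_le (inv_pos.2 hγ0) (hq.trans hκ') (hsq hκ') hκκ' hzκ hzκ' hS hT ?_
  filter_upwards [hW, eventually_ne_atTop 0] with n hWn hn
  exact resolventTrace_anti hn hbz' hz'z.le hWn

section CenteredProductSum

variable [IsProbabilityMeasure P] {f : ℝ → ℝ} {D : ℝ}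

theorem measure_centeredProductSum_le {u v : Fin (p n - k) → NoiseIndex k (p n - k)} {C ε : ℝ}
    (hn : n ≠ 0) (hC : 0 < C) (hε : 0 < ε)
    (hcard : Fintype.card (NoiseIndex k (p n - k)) ≤ C * n)
    (hf : Measurable f) (hD : 0 < D) (hfD : ∀ x ∈ Set.Icc 0 b, |f x| ≤ D)
    (hu : u.Injective) (hv : v.Injective) :
    P {ω | SqNormBound (B.W n ω) (n * b) ∧
        ε ≤ |1 / (n : ℝ) * centeredProductSum u v (fun α => f (B.lam n ω α)) (B.noise n ω)|} ≤
      ENNReal.ofReal (2 * Real.exp (-quadFormRate D C ε * n)) := by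
  have hn' : (0 : ℝ) < n := by positivity
  let weight (W : Matrix (Fin (n - k)) (Fin (p n - k)) ℝ) (α : Fin (p n - k)) : ℝ :=
    f (ithEigDesc (Wᵀ * W) α / n)
  have hweight : Measurable weight := measurable_pi_lambda _ fun α =>
    hf.comp (((measurable_pi_apply α).comp measurable_ithEigDesc_gram).div_const _)
  have hweightD : ∀ W ∈ {W | SqNormBound W (n * b)}, ∀ α, |weight W α| ≤ D := fun W hW α => by
    obtain ⟨h0, hle⟩ := ithEigDesc_gram_mem_Icc hW α
    exact hfD _ ⟨div_nonneg h0 hn'.le, (div_le_iff₀' hn').2 hle⟩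
  refine le_trans (measure_mono fun ω hω => ?_)
    ((measure_mem_le_of_hasLaw (B.hasLaw_W_noise n) _).trans
      (prod_gaussianArray_centeredProductSum_le_exp hD hC hε hcard hu hv
        (measurableSet_sqNormBound _) hweight hweightD))
  have hlam : (fun α => f (B.lam n ω α)) = weight (B.W n ω) :=
    funext fun α => congrArg f (B.lam_eq_ithEigDesc_div hn ω α)
  refine ⟨hω.1, ?_⟩
  rw [← hlam, ← le_div_iff₀ hn', div_eq_inv_mul, ← one_div, ← abs_of_pos (one_div_pos.2 hn'),
    ← abs_mul]
  exact hω.2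

theorem ae_tendsto_centeredProductSum (hγ : 0 < γ) (hb : bGamma γ < b)
    (hf : Measurable f) (hD : 0 < D) (hfD : ∀ x ∈ Set.Icc 0 b, |f x| ≤ D)
    {u v : ∀ n, Fin (p n - k) → NoiseIndex k (p n - k)}
    (hu : ∀ n, (u n).Injective) (hv : ∀ n, (v n).Injective) :
    ∀ᵐ ω ∂P, Tendsto (fun n : ℕ => 1 / (n : ℝ) *
      centeredProductSum (u n) (v n) (fun α => f (B.lam n ω α)) (B.noise n ω)) atTop (𝓝 0) := by
  have hC : 0 < (2 * k + 1) * (γ⁻¹ + 1) := by positivity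
  have hconc : ∀ ε > 0, ∃ A c : ℝ, 0 < c ∧ ∀ᶠ n : ℕ in atTop,
      P {ω | ω ∈ {ω | SqNormBound (B.W n ω) (n * b)} ∧ ε ≤ |1 / (n : ℝ) *
        centeredProductSum (u n) (v n) (fun α => f (B.lam n ω α)) (B.noise n ω)|} ≤
        ENNReal.ofReal (A * n * Real.exp (-c * n)) := by
    refine fun ε hε => ⟨2, _, quadFormRate_pos hD hC hε, ?_⟩
    filter_upwards [B.eventually_cols_le hγ (lt_add_one γ⁻¹), eventually_ne_atTop 0] with n hcols hn
    have hcard : (Fintype.card (NoiseIndex k (p n - k)) : ℝ) ≤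
        (2 * k + 1) * (γ⁻¹ + 1) * n := by
      simp only [Fintype.card_sum, Fintype.card_prod, Fintype.card_fin, Nat.cast_add, Nat.cast_mul]
      nlinarith [Nat.cast_nonneg (α := ℝ) k, Nat.cast_nonneg (α := ℝ) (p n - k)]
    refine (B.measure_centeredProductSum_le hn hC hε hcard hf hD hfD (hu n) (hv n)).trans ?_
    gcongr
    exact le_mul_of_one_le_right zero_le_two (Nat.one_le_cast.2 (Nat.one_le_iff_ne_zero.2 hn))
  filter_upwards [ae_tendsto_zero_of_measure_le_exp hconc, B.ae_eventually_sqNormBound hγ hb]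
    with ω hω hW using hω hW

end CenteredProductSum

section Entries

variable {B}

theorem sum_lam_sub_inv (n : ℕ) (ω : Ω) (z : ℝ) :
    1 / (n : ℝ) * ∑ α, (B.lam n ω α - z)⁻¹ = -B.resolventTrace n ω z := by
  simp only [resolventTrace, ← neg_sub z, inv_neg, Finset.sum_neg_distrib, mul_neg]

variable (h : ∀ α, B.lam n ω α ≠ z) (i j : Fin k)

include h

theorem q1_apply :
    B.q1 n ω z i j = 1 / (n : ℝ) * centeredProductSum (fun α => .inl (i, α)) (fun α => .inl (j, α))
      (fun α => (B.lam n ω α - z)⁻¹) (B.noise n ω) +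
        -B.resolventTrace n ω z * (1 : Matrix (Fin k) (Fin k) ℝ) i j := by
  rw [← sum_lam_sub_inv, mul_assoc, ← mul_add, one_apply,
    ← sum_mul_eq_centeredProductSum_add (by simp), q1, diagonal_sub_smul_one_inv h,
    Matrix.smul_apply, mul_apply, smul_eq_mul]
  simp only [mul_diagonal, transpose_apply, noise, Sum.elim_inl, matEntries]
  congr! 2 with α
  ring

theorem q2_apply :
    B.q2 n ω z i j = 1 / (n : ℝ) * centeredProductSum (fun α => .inr (α, i)) (fun α => .inr (α, j))
      (fun α => (B.lam n ω α - z)⁻¹) (B.noise n ω) +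
        -B.resolventTrace n ω z * (1 : Matrix (Fin k) (Fin k) ℝ) i j := by
  rw [← sum_lam_sub_inv, mul_assoc, ← mul_add, one_apply,
    ← sum_mul_eq_centeredProductSum_add (by simp), q2, diagonal_sub_smul_one_inv h,
    Matrix.smul_apply, mul_apply, smul_eq_mul]
  simp only [mul_diagonal, transpose_apply, noise, Sum.elim_inr, matEntries]
  congr! 2 with α
  ring

theorem q3_apply :
    B.q3 n ω z i j = 1 / (n : ℝ) * centeredProductSum (fun α => .inl (i, α)) (fun α => .inr (α, j))
      (fun α => (B.lam n ω α - z)⁻¹ * √(B.lam n ω α)) (B.noise n ω) := by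
  rw [q3, diagonal_sub_smul_one_inv h, Matrix.smul_apply, mul_apply, smul_eq_mul,
    centeredProductSum]
  simp only [mul_diagonal, noise, Sum.elim_inl, Sum.elim_inr, matEntries, reduceCtorEq, if_false,
    sub_zero]
  congr! 2 with α
  ring

end Entries

section Limits

variable [IsProbabilityMeasure P]

theorem ae_tendsto_centeredProductSum_inv (hγ : 0 < γ) (hz : bGamma γ < z)
    {u v : ∀ n, Fin (p n - k) → NoiseIndex k (p n - k)}
    (hu : ∀ n, (u n).Injective) (hv : ∀ n, (v n).Injective) :
    ∀ᵐ ω ∂P, Tendsto (fun n : ℕ => 1 / (n : ℝ) * centeredProductSum (u n) (v n)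
      (fun α => (B.lam n ω α - z)⁻¹) (B.noise n ω)) atTop (𝓝 0) := by
  obtain ⟨b, hb, hbz⟩ := exists_between hz
  exact B.ae_tendsto_centeredProductSum hγ hb (f := fun x => (x - z)⁻¹) (by fun_prop)
    (inv_pos.2 (sub_pos.2 hbz)) (fun x hx => abs_sub_inv_le hx.2 hbz) hu hv

theorem ae_tendsto_centeredProductSum_inv_mul_sqrt (hγ : 0 < γ) (hz : bGamma γ < z)
    {u v : ∀ n, Fin (p n - k) → NoiseIndex k (p n - k)}
    (hu : ∀ n, (u n).Injective) (hv : ∀ n, (v n).Injective) :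
    ∀ᵐ ω ∂P, Tendsto (fun n : ℕ => 1 / (n : ℝ) * centeredProductSum (u n) (v n)
      (fun α => (B.lam n ω α - z)⁻¹ * √(B.lam n ω α)) (B.noise n ω)) atTop (𝓝 0) := by
  obtain ⟨b, hb, hbz⟩ := exists_between hz
  have hb0 : 0 < b := (sq_nonneg _).trans_lt hb
  refine B.ae_tendsto_centeredProductSum hγ hb (f := fun x => (x - z)⁻¹ * √x) (by fun_prop)
    (mul_pos (inv_pos.2 (sub_pos.2 hbz)) (Real.sqrt_pos.2 hb0)) (fun x hx => ?_) hu hv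
  rw [abs_mul, abs_of_nonneg (Real.sqrt_nonneg x)]
  exact mul_le_mul (abs_sub_inv_le hx.2 hbz) (Real.sqrt_le_sqrt hx.2) (Real.sqrt_nonneg x)
    (inv_nonneg.2 (sub_nonneg.2 hbz.le))

theorem ae_tendsto_q1_apply (hγ : 1 ≤ γ) (hz : bGamma γ < z) (i j : Fin k) :
    ∀ᵐ ω ∂P, Tendsto (fun n => B.q1 n ω z i j) atTop
      (𝓝 (((γ⁻¹ * mpStieltjes γ z) • (1 : Matrix (Fin k) (Fin k) ℝ)) i j)) := by
  have hγ0 : 0 < γ := one_pos.trans_le hγ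
  filter_upwards [B.ae_eventually_lam_ne hγ0 hz, B.ae_tendsto_resolventTrace hγ hz,
    B.ae_tendsto_centeredProductSum_inv hγ0 hz (u := fun _ α => .inl (i, α))
      (v := fun _ α => .inl (j, α)) (fun _ => Sum.inl_injective.comp (Prod.mk_right_injective i))
      (fun _ => Sum.inl_injective.comp (Prod.mk_right_injective j))] with ω hlam htrace hsum
  have hlim := hsum.add (htrace.neg.mul_const ((1 : Matrix (Fin k) (Fin k) ℝ) i j))
  rw [neg_neg, zero_add] at hlim
  exact hlim.congr' (hlam.mono fun n hn => (q1_apply hn i j).symm)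

theorem ae_tendsto_q2_apply (hγ : 1 ≤ γ) (hz : bGamma γ < z) (i j : Fin k) :
    ∀ᵐ ω ∂P, Tendsto (fun n => B.q2 n ω z i j) atTop
      (𝓝 (((γ⁻¹ * mpStieltjes γ z) • (1 : Matrix (Fin k) (Fin k) ℝ)) i j)) := by
  have hγ0 : 0 < γ := one_pos.trans_le hγ
  filter_upwards [B.ae_eventually_lam_ne hγ0 hz, B.ae_tendsto_resolventTrace hγ hz,
    B.ae_tendsto_centeredProductSum_inv hγ0 hz (u := fun _ α => .inr (α, i))
      (v := fun _ α => .inr (α, j)) (fun _ => Sum.inr_injective.comp (Prod.mk_left_injective i))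
      (fun _ => Sum.inr_injective.comp (Prod.mk_left_injective j))] with ω hlam htrace hsum
  have hlim := hsum.add (htrace.neg.mul_const ((1 : Matrix (Fin k) (Fin k) ℝ) i j))
  rw [neg_neg, zero_add] at hlim
  exact hlim.congr' (hlam.mono fun n hn => (q2_apply hn i j).symm)

theorem ae_tendsto_q3_apply (hγ : 0 < γ) (hz : bGamma γ < z) (i j : Fin k) :
    ∀ᵐ ω ∂P, Tendsto (fun n => B.q3 n ω z i j) atTop (𝓝 0) := by
  filter_upwards [B.ae_eventually_lam_ne hγ hz,
    B.ae_tendsto_centeredProductSum_inv_mul_sqrt hγ hz (u := fun _ α => .inl (i, α))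
      (v := fun _ α => .inr (α, j)) (fun _ => Sum.inl_injective.comp (Prod.mk_right_injective i))
      (fun _ => Sum.inr_injective.comp (Prod.mk_left_injective j))] with ω hlam hsum
  exact hsum.congr' (hlam.mono fun n hn => (q3_apply hn i j).symm)

end Limits

end NoiseBlocks

/-- For every real `z > b_γ`, almost surely, as `n → ∞`:
`(1/n) E₁₂ (Λ_n − z I)⁻¹ E₁₂ᵀ → γ⁻¹ m(z) I_k`, `(1/n) E₂₁ᵀ (Λ_n − z I)⁻¹ E₂₁ → γ⁻¹ m(z) I_k`,
and `(1/n) E₁₂ (Λ_n − z I)⁻¹ Λ_n^{1/2} E₂₁ → 0` (entrywise). -/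
theorem weighted_noise_products_as_limits
    {k : ℕ} (hk : 1 ≤ k) {γ : ℝ} (hγ : 1 ≤ γ)
    {p : ℕ → ℕ} {Ω : Type*} [MeasurableSpace Ω] {P : Measure Ω} [IsProbabilityMeasure P]
    (B : NoiseBlocks k γ p Ω P) (z : ℝ) (hz : bGamma γ < z) :
    ∀ᵐ ω ∂P, ∀ i j : Fin k,
      Tendsto (fun n => B.q1 n ω z i j) atTop
        (𝓝 (((γ⁻¹ * mpStieltjes γ z) • (1 : Matrix (Fin k) (Fin k) ℝ)) i j))
      ∧ Tendsto (fun n => B.q2 n ω z i j) atTop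
        (𝓝 (((γ⁻¹ * mpStieltjes γ z) • (1 : Matrix (Fin k) (Fin k) ℝ)) i j))
      ∧ Tendsto (fun n => B.q3 n ω z i j) atTop (𝓝 0) := by
  simp only [ae_all_iff]
  intro i j
  filter_upwards [B.ae_tendsto_q1_apply hγ hz i j, B.ae_tendsto_q2_apply hγ hz i j,
    B.ae_tendsto_q3_apply (one_pos.trans_le hγ) hz i j] with ω h1 h2 h3
  exact ⟨h1, h2, h3⟩
end
end

section
/- Let A be a real symmetric k×k matrix, let x ∈ ℝ^k with ‖x‖₂ = 1, let z ∈ ℝ, and set r = A·x − z·x. Suppose there is a set L of k−1 eigenvalues of A (counted with multiplicity) such that δ = min_{l ∈ L} |l − z| > 0 and ‖r‖₂ ≤ δ. Then there exists an eigenvalue z_0 of A with unit eigenvector x_0 such that xᵀ·x_0 ≥ √(1 − ‖r‖₂²/δ²) and |z − z_0| ≤ ‖r‖₂. -/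
open MeasureTheory ProbabilityTheory Filter Matrix Topology

noncomputable section

/-!
In an orthonormal eigenbasis `b` of an operator `T`, with eigenvalues `l`, the residual
`T x - z • x` has coordinates `(l i - z) * ⟪b i, x⟫`. By Parseval, if `δ ≤ |l i - z|` for all `i` in
a set `L`, then `δ² ∑_{i ∈ L} |⟪b i, x⟫|² ≤ ‖T x - z • x‖²`. Let `l i` be an eigenvalue nearest to
`z`. The inequality over all indices, with `δ = |l i - z|`, bounds `|l i - z|`. At most one index
lies outside the given `L`, so `δ ≤ |l j - z|` for every `j ≠ i`: if `j ∉ L` then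
`i ∈ L` and `δ ≤ |l i - z| ≤ |l j - z|`. The inequality over the indices `j ≠ i` therefore bounds
`1 - |⟪b i, x⟫|²`, and a unit scalar multiple of `b i` has inner product `|⟪b i, x⟫|` with `x`.
-/

section OrthonormalEigenbasis

open scoped InnerProductSpace

variable {𝕜 E ι : Type*} [RCLike 𝕜] [NormedAddCommGroup E] [InnerProductSpace 𝕜 E]

lemma exists_norm_eq_one_inner_smul_eq_norm (x v : E) :
    ∃ c : 𝕜, ‖c‖ = 1 ∧ ⟪x, c • v⟫_𝕜 = ‖⟪v, x⟫_𝕜‖ := by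
  obtain ⟨c, hc, hcv⟩ := RCLike.exists_norm_eq_mul_self ⟪x, v⟫_𝕜
  exact ⟨c, hc, by rw [inner_smul_right, ← hcv, norm_inner_symm]⟩

variable [Fintype ι] {b : OrthonormalBasis ι 𝕜 E} {T : E →ₗ[𝕜] E} {l : ι → 𝕜}

lemma inner_apply_of_orthonormal_eigenbasis (hT : ∀ i, T (b i) = l i • b i) (x : E) (i : ι) :
    ⟪b i, T x⟫_𝕜 = l i * ⟪b i, x⟫_𝕜 := by
  classical
  calc ⟪b i, T x⟫_𝕜 = ⟪b i, ∑ j, (⟪b j, x⟫_𝕜 * l j) • b j⟫_𝕜 := by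
        conv_lhs => rw [← b.sum_repr' x]
        simp only [map_sum, map_smul, hT, smul_smul]
    _ = l i * ⟪b i, x⟫_𝕜 := by rw [b.orthonormal.inner_right_fintype, mul_comm]

lemma inner_residual_of_orthonormal_eigenbasis (hT : ∀ i, T (b i) = l i • b i) (x : E) (z : 𝕜)
    (i : ι) : ⟪b i, T x - z • x⟫_𝕜 = (l i - z) * ⟪b i, x⟫_𝕜 := by
  rw [inner_sub_right, inner_apply_of_orthonormal_eigenbasis hT, inner_smul_right, sub_mul]

lemma sq_mul_sum_sq_norm_inner_le_sq_norm_residual (hT : ∀ i, T (b i) = l i • b i) (x : E) (z : 𝕜)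
    {δ : ℝ} (hδ : 0 ≤ δ) {L : Finset ι} (hL : ∀ i ∈ L, δ ≤ ‖l i - z‖) :
    δ ^ 2 * ∑ i ∈ L, ‖⟪b i, x⟫_𝕜‖ ^ 2 ≤ ‖T x - z • x‖ ^ 2 :=
  calc δ ^ 2 * ∑ i ∈ L, ‖⟪b i, x⟫_𝕜‖ ^ 2
      ≤ ∑ i ∈ L, ‖l i - z‖ ^ 2 * ‖⟪b i, x⟫_𝕜‖ ^ 2 := by
        rw [Finset.mul_sum]
        gcongr with i hi
        exact hL i hi
    _ = ∑ i ∈ L, ‖⟪b i, T x - z • x⟫_𝕜‖ ^ 2 := by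
        simp only [inner_residual_of_orthonormal_eigenbasis hT, norm_mul, mul_pow]
    _ ≤ ‖T x - z • x‖ ^ 2 := b.orthonormal.sum_inner_products_le _

lemma norm_eigenvalue_sub_mul_norm_le_norm_residual (hT : ∀ i, T (b i) = l i • b i) (x : E) {z : 𝕜}
    {i : ι} (hi : ∀ j, ‖l i - z‖ ≤ ‖l j - z‖) : ‖l i - z‖ * ‖x‖ ≤ ‖T x - z • x‖ := by
  have h := sq_mul_sum_sq_norm_inner_le_sq_norm_residual hT x z (norm_nonneg (l i - z))
    (L := Finset.univ) fun j _ => hi j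
  rw [b.sum_sq_norm_inner_right, ← mul_pow] at h
  exact le_of_sq_le_sq h (norm_nonneg _)

lemma sq_mul_sq_norm_sub_sq_norm_inner_le_sq_norm_residual (hT : ∀ i, T (b i) = l i • b i) (x : E)
    {z : 𝕜} {δ : ℝ} (hδ : 0 ≤ δ) {i : ι} (hi : ∀ j ≠ i, δ ≤ ‖l j - z‖) :
    δ ^ 2 * (‖x‖ ^ 2 - ‖⟪b i, x⟫_𝕜‖ ^ 2) ≤ ‖T x - z • x‖ ^ 2 := by
  classical
  have h := sq_mul_sum_sq_norm_inner_le_sq_norm_residual hT x z hδ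
    (L := Finset.univ.erase i) fun j hj => hi j (Finset.ne_of_mem_erase hj)
  rwa [Finset.sum_erase_eq_sub (Finset.mem_univ i), b.sum_sq_norm_inner_right] at h

lemma le_of_ne_minimizer_of_card_le {α : Type*} [Preorder α] {f : ι → α} {δ : α} {L : Finset ι}
    (hL : Fintype.card ι ≤ L.card + 1) (hδ : ∀ j ∈ L, δ ≤ f j) {i : ι} (hi : ∀ j, f i ≤ f j)
    {j : ι} (hj : j ≠ i) : δ ≤ f j := by
  classical
  by_cases hjL : j ∈ L
  · exact hδ j hjL
  · have hLc : Lᶜ.card ≤ 1 := by rw [Finset.card_compl]; omega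
    have hiL : i ∈ L := by
      by_contra hiL
      exact hj <| Finset.card_le_one.mp hLc j (Finset.mem_compl.mpr hjL) i
        (Finset.mem_compl.mpr hiL)
    exact (hδ i hiL).trans (hi j)

theorem approx_eigenpair_general (hT : ∀ i, T (b i) = l i • b i) {x : E} (hx : ‖x‖ = 1) (z : 𝕜)
    {L : Finset ι} (hL : Fintype.card ι ≤ L.card + 1) {δ : ℝ} (hδpos : 0 < δ)
    (hδ : ∀ i ∈ L, δ ≤ ‖l i - z‖) :
    ∃ (z₀ : 𝕜) (x₀ : E), T x₀ = z₀ • x₀ ∧ ‖x₀‖ = 1 ∧ 0 ≤ RCLike.re ⟪x, x₀⟫_𝕜 ∧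
      1 - ‖T x - z • x‖ ^ 2 / δ ^ 2 ≤ RCLike.re ⟪x, x₀⟫_𝕜 ^ 2 ∧ ‖z - z₀‖ ≤ ‖T x - z • x‖ := by
  have : Nontrivial E := nontrivial_of_ne x 0 (norm_ne_zero_iff.mp (hx ▸ one_ne_zero))
  have : Nonempty ι := b.toBasis.index_nonempty
  obtain ⟨i, hi⟩ := Finite.exists_min fun i => ‖l i - z‖
  obtain ⟨c, hc, hcx⟩ := exists_norm_eq_one_inner_smul_eq_norm (𝕜 := 𝕜) x (b i)
  refine ⟨l i, c • b i, by rw [map_smul, hT, smul_comm], ?_, ?_, ?_, ?_⟩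
  · rw [norm_smul, hc, b.norm_eq_one, mul_one]
  · rw [hcx, RCLike.ofReal_re]
    exact norm_nonneg _
  · have hsin := sq_mul_sq_norm_sub_sq_norm_inner_le_sq_norm_residual hT x hδpos.le
      fun j hj => le_of_ne_minimizer_of_card_le hL hδ hi hj
    rw [hcx, RCLike.ofReal_re, sub_le_comm, le_div_iff₀' (by positivity)]
    simpa only [hx, one_pow] using hsin
  · simpa only [hx, mul_one, norm_sub_rev] using
      norm_eigenvalue_sub_mul_norm_le_norm_residual hT x hi

end OrthonormalEigenbasis

lemma toEuclideanLin_eigenvectorBasis {𝕜 n : Type*} [RCLike 𝕜] [Fintype n] [DecidableEq n]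
    {A : Matrix n n 𝕜} (hA : A.IsHermitian) (i : n) :
    A.toEuclideanLin (hA.eigenvectorBasis i) =
      (hA.eigenvalues i : 𝕜) • hA.eigenvectorBasis i := by
  ext j
  simpa [RCLike.real_smul_eq_coe_mul] using congrFun (hA.mulVec_eigenvectorBasis i) j

/-- (A consequence of the `sin Θ` theorem.) Let `A` be a real symmetric
`k × k` matrix, `x` a unit vector, `z ∈ ℝ` and `r = A x − z x`. If there is a set `L` of
`k − 1` eigenvalues of `A` (counted with multiplicity, indexed by a subset of indices of an
eigenvalue enumeration) all at distance at least `δ > 0` from `z`, and `‖r‖₂ ≤ δ`, then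
there is an eigenpair `(z₀, x₀)` of `A` with `‖x₀‖₂ = 1`, `xᵀ x₀ ≥ √(1 − ‖r‖₂²/δ²)` and
`|z − z₀| ≤ ‖r‖₂`. -/
theorem approx_eigenpair
    {k : ℕ} (A : Matrix (Fin k) (Fin k) ℝ) (hA : A.IsHermitian)
    (x : Fin k → ℝ) (hx : ∑ j, x j ^ 2 = 1) (z : ℝ)
    (r : Fin k → ℝ) (hr : r = A *ᵥ x - z • x)
    (L : Finset (Fin k)) (hL : L.card = k - 1)
    (δ : ℝ) (hδpos : 0 < δ)
    (hδ : ∀ i ∈ L, δ ≤ |hA.eigenvalues i - z|)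
    (hrsmall : Real.sqrt (∑ j, r j ^ 2) ≤ δ) :
    ∃ (z₀ : ℝ) (x₀ : Fin k → ℝ),
      A *ᵥ x₀ = z₀ • x₀ ∧ (∑ j, x₀ j ^ 2) = 1 ∧
      Real.sqrt (1 - (∑ j, r j ^ 2) / δ ^ 2) ≤ ∑ j, x j * x₀ j ∧
      |z - z₀| ≤ Real.sqrt (∑ j, r j ^ 2) := by
  obtain ⟨z₀, x₀, hx₀, hnorm, h⟩ := approx_eigenpair_general (toEuclideanLin_eigenvectorBasis hA)
      (x := WithLp.toLp 2 x) (by simp [EuclideanSpace.norm_eq, hx]) z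
      (by rw [Fintype.card_fin]; omega) hδpos hδ
  refine ⟨z₀, x₀, congrArg WithLp.ofLp hx₀, by simpa [EuclideanSpace.norm_eq] using hnorm, ?_⟩
  simpa [hr, Real.sqrt_le_iff, and_assoc, ↓EuclideanSpace.real_norm_sq_eq, EuclideanSpace.norm_eq,
    PiLp.inner_apply, Matrix.toLpLin_apply, mul_comm] using h
end
end
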